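/- arXiv:2512.09712 — 18 statements merged into one kernel-verified Lean document; each statement's English description precedes it below -/
import Mathlib

section
/- Let f : ℝⁿ → ℝ be a twice continuously differentiable convex function with global minimizer x*, and let x : [0,∞) → ℝⁿ be a twice differentiable solution of the damped-Newton flow ∇²f(x(t))·ẋ(t) + ∇f(x(t)) = 0 for all t ≥ 0. Then f(x(t)) − f(x*) = O(e^{−t}) as t → ∞; that is, there exist constants T, C > 0 such that f(x(t)) − f(x*) ≤ C·e^{−t} for all t ≥ T. -/
open scoped RealInnerProductSpace

/-- A curve satisfying `g' = -g` on `[0, ∞)` is `g t = e^{-t} g 0`. -/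
theorem eq_exp_neg_smul_of_hasDerivAt {E : Type*} [NormedAddCommGroup E] [NormedSpace ℝ E]
    {g g' : ℝ → E} (hg : ∀ t : ℝ, 0 ≤ t → HasDerivAt g (g' t) t)
    (hode : ∀ t : ℝ, 0 ≤ t → g' t + g t = 0) {t : ℝ} (ht : 0 ≤ t) :
    g t = Real.exp (-t) • g 0 := by
  have hderiv : ∀ s : ℝ, 0 ≤ s → HasDerivAt (fun r => Real.exp r • g r) 0 s := by
    intro s hs
    have h := (Real.hasDerivAt_exp s).smul (hg s hs)
    rwa [← smul_add, hode s hs, smul_zero] at h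
  have hconst := constant_of_has_deriv_right_zero (a := 0) (b := t)
    (fun s hs => (hderiv s hs.1).continuousAt.continuousWithinAt)
    (fun s hs => (hderiv s hs.1).hasDerivWithinAt) t ⟨ht, le_rfl⟩
  simp only [Real.exp_zero, one_smul] at hconst
  rw [← hconst, smul_smul, ← Real.exp_add, neg_add_cancel, Real.exp_zero, one_smul]

/-- For a twice continuously differentiable convex function `f` on `ℝⁿ`
with global minimizer `x*`, any twice differentiable solution of the damped-Newton flow
`∇²f(x(t))·ẋ(t) + ∇f(x(t)) = 0` (for `t ≥ 0`) satisfies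
`f(x(t)) − f(x*) = O(e^{−t})` as `t → ∞`. -/
theorem damped_newton_flow_exponential_rate {n : ℕ}
    (f : EuclideanSpace ℝ (Fin n) → ℝ)
    (xstar : EuclideanSpace ℝ (Fin n))
    (hf : ContDiff ℝ 2 f)
    (hmin : ∀ y, f xstar ≤ f y)
    (hconv : ∀ y z : EuclideanSpace ℝ (Fin n),
      f z ≥ f y + ⟪gradient f y, z - y⟫)
    (x v a H : ℝ → EuclideanSpace ℝ (Fin n))
    (hx : ∀ t : ℝ, 0 ≤ t → HasDerivAt x (v t) t)
    (hv : ∀ t : ℝ, 0 ≤ t → HasDerivAt v (a t) t)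
    (hH : ∀ t : ℝ, 0 ≤ t → HasDerivAt (fun s => gradient f (x s)) (H t) t)
    (hode : ∀ t : ℝ, 0 ≤ t → H t + gradient f (x t) = 0) :
    ∃ T C : ℝ, 0 < T ∧ 0 < C ∧
      ∀ t : ℝ, T ≤ t → f (x t) - f xstar ≤ C * Real.exp (-t) := by
  have hgrad : ∀ t : ℝ, 0 ≤ t → gradient f (x t) = Real.exp (-t) • gradient f (x 0) :=
    fun t ht => eq_exp_neg_smul_of_hasDerivAt hH hode ht
  refine ⟨1, |⟪gradient f (x 0), x 0 - xstar⟫| + 1, one_pos, by positivity, fun t ht => ?_⟩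
  have hstar := hconv (x t) xstar
  have hback := hconv (x t) (x 0)
  have hforth := hconv (x 0) (x t)
  rw [hgrad t (by linarith), real_inner_smul_left, inner_sub_right] at hstar hback
  rw [inner_sub_right] at hforth
  have hexp_lt : Real.exp (-t) < 1 := Real.exp_lt_one_iff.2 (by linarith)
  have hexp_pos := Real.exp_pos (-t)
  have hanti : ⟪gradient f (x 0), x t⟫ ≤ ⟪gradient f (x 0), x 0⟫ := by
    by_contra! hlt
    nlinarith [mul_pos (sub_pos.2 hexp_lt) (sub_pos.2 hlt)]
  have habs := le_abs_self ⟪gradient f (x 0), x 0 - xstar⟫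
  nth_rewrite 1 [inner_sub_right] at habs
  nlinarith [mul_le_mul_of_nonneg_left hanti hexp_pos.le,
    mul_le_mul_of_nonneg_left habs hexp_pos.le]
end

section
/- Let f : ℝⁿ → ℝ be a twice continuously differentiable convex function with global minimizer x*, write f* = f(x*), and let x : [0,∞) → ℝⁿ be a twice differentiable solution of ∇²f(x(t))·ẋ(t) + ∇f(x(t)) = 0. Then for every k with 0 ≤ k ≤ 1, the function E(t) = k·e^{kt}·( f* − f(x(t)) + ⟨∇f(x(t)), x(t) − x*⟩ ) + e^{kt}·( f(x(t)) − f* ) is non-increasing on [0,∞), and satisfies E(t) ≥ e^{kt}·( f(x(t)) − f* ) for all t ≥ 0. -/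
open scoped RealInnerProductSpace

/-- Along a differentiable curve, a monotone vector field has a derivative making a nonnegative
inner product with the velocity. -/
lemma inner_deriv_nonneg_of_monotone {F : Type*} [NormedAddCommGroup F] [InnerProductSpace ℝ F]
    {G : F → F} (hG : ∀ y z : F, 0 ≤ ⟪G y - G z, y - z⟫) {x : ℝ → F} {v w : F} {t : ℝ}
    (hx : HasDerivAt x v t) (hw : HasDerivAt (fun s => G (x s)) w t) : 0 ≤ ⟪w, v⟫ := by
  refine ge_of_tendsto' (hw.tendsto_slope.inner hx.tendsto_slope) fun s => ?_
  simp only [slope, vsub_eq_sub, real_inner_smul_left, real_inner_smul_right, ← mul_assoc]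
  exact mul_nonneg (mul_self_nonneg _) (hG _ _)

/-- The gradient inequality implies that the gradient is a monotone vector field. -/
lemma gradient_monotone_of_gradient_inequality {F : Type*} [NormedAddCommGroup F]
    [InnerProductSpace ℝ F] [CompleteSpace F] {f : F → ℝ}
    (hconv : ∀ y z : F, f z ≥ f y + ⟪gradient f y, z - y⟫) (y z : F) :
    0 ≤ ⟪gradient f y - gradient f z, y - z⟫ := by
  have hyz := hconv y z
  have hzy := hconv z y
  rw [← neg_sub y z, inner_neg_right] at hyz
  rw [inner_sub_left]
  linarith

/-- Lyapunov function for the damped-Newton flow: for a twice continuously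
differentiable convex `f` with minimizer `x*` and a twice differentiable solution of
`∇²f(x(t))·ẋ(t) + ∇f(x(t)) = 0`, for every `0 ≤ k ≤ 1` the function
`E(t) = k·e^{kt}·(f* − f(x(t)) + ⟨∇f(x(t)), x(t) − x*⟩) + e^{kt}·(f(x(t)) − f*)`
is non-increasing on `[0,∞)` and dominates `e^{kt}·(f(x(t)) − f*)`. -/
theorem damped_newton_flow_lyapunov {n : ℕ}
    (f : EuclideanSpace ℝ (Fin n) → ℝ)
    (xstar : EuclideanSpace ℝ (Fin n))
    (hf : ContDiff ℝ 2 f)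
    (hmin : ∀ y, f xstar ≤ f y)
    (hconv : ∀ y z : EuclideanSpace ℝ (Fin n),
      f z ≥ f y + ⟪gradient f y, z - y⟫)
    (x v a H : ℝ → EuclideanSpace ℝ (Fin n))
    (hx : ∀ t : ℝ, 0 ≤ t → HasDerivAt x (v t) t)
    (hv : ∀ t : ℝ, 0 ≤ t → HasDerivAt v (a t) t)
    (hH : ∀ t : ℝ, 0 ≤ t → HasDerivAt (fun s => gradient f (x s)) (H t) t)
    (hode : ∀ t : ℝ, 0 ≤ t → H t + gradient f (x t) = 0)
    (k : ℝ) (hk0 : 0 ≤ k) (hk1 : k ≤ 1) :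
    AntitoneOn (fun t : ℝ =>
        k * Real.exp (k * t) * (f xstar - f (x t) + ⟪gradient f (x t), x t - xstar⟫)
          + Real.exp (k * t) * (f (x t) - f xstar)) (Set.Ici (0 : ℝ))
      ∧ ∀ t : ℝ, 0 ≤ t →
        k * Real.exp (k * t) * (f xstar - f (x t) + ⟪gradient f (x t), x t - xstar⟫)
          + Real.exp (k * t) * (f (x t) - f xstar)
        ≥ Real.exp (k * t) * (f (x t) - f xstar) := by
  have hgap : ∀ t, 0 ≤ f xstar - f (x t) + ⟪gradient f (x t), x t - xstar⟫ := fun t => by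
    have h := hconv (x t) xstar
    rw [← neg_sub (x t) xstar, inner_neg_right] at h
    linarith
  refine ⟨?_, fun t _ => le_add_of_nonneg_left
    (mul_nonneg (mul_nonneg hk0 (Real.exp_pos _).le) (hgap t))⟩
  have hH_eq : ∀ t, 0 ≤ t → H t = -gradient f (x t) := fun t ht =>
    eq_neg_of_add_eq_zero_left (hode t ht)
  have hdescent : ∀ t, 0 ≤ t → ⟪gradient f (x t), v t⟫ ≤ 0 := fun t ht => by
    have h := inner_deriv_nonneg_of_monotone (gradient_monotone_of_gradient_inequality hconv)
      (hx t ht) (hH t ht)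
    rw [hH_eq t ht, inner_neg_left] at h
    linarith
  have hderiv : ∀ t, 0 ≤ t → HasDerivAt (fun t : ℝ =>
      k * Real.exp (k * t) * (f xstar - f (x t) + ⟪gradient f (x t), x t - xstar⟫)
        + Real.exp (k * t) * (f (x t) - f xstar))
      (Real.exp (k * t) * (⟪gradient f (x t), v t⟫
        - k * (1 - k) * (f xstar - f (x t) + ⟪gradient f (x t), x t - xstar⟫))) t := by
    intro t ht
    have hfx : HasDerivAt (fun s => f (x s)) ⟪gradient f (x t), v t⟫ t := by
      have h := ((hf.differentiable (by norm_num)).differentiableAt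
        (x := x t)).hasGradientAt.hasFDerivAt.comp_hasDerivAt t (hx t ht)
      simpa [Function.comp_def] using h
    have hinner := (hH t ht).inner ℝ ((hx t ht).sub_const xstar)
    have hexp : HasDerivAt (fun s => Real.exp (k * s)) (Real.exp (k * t) * k) t := by
      simpa using ((hasDerivAt_id t).const_mul k).exp
    refine (((hexp.const_mul k).mul ((hfx.const_sub (f xstar)).add hinner)).add
      (hexp.mul (hfx.sub_const (f xstar)))).congr_deriv ?_
    simp only [hH_eq t ht, inner_neg_left, Pi.add_apply]
    ring
  refine antitoneOn_of_hasDerivWithinAt_nonpos (convex_Ici 0)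
    (fun t ht => (hderiv t ht).continuousAt.continuousWithinAt)
    (fun t ht => (hderiv t (interior_subset ht)).hasDerivWithinAt) fun t ht => ?_
  have hdecay := mul_nonneg (mul_nonneg hk0 (sub_nonneg.2 hk1)) (hgap t)
  have hslope := hdescent t (interior_subset ht)
  exact mul_nonpos_of_nonneg_of_nonpos (Real.exp_pos _).le (by linarith)
end

section
/- Let 0 < μ < L, and let f : ℝⁿ → ℝ be twice continuously differentiable, μ-strongly convex and L-smooth, with global minimizer x*. Let x : [0,∞) → ℝⁿ be a twice differentiable solution of ẋ(t) − (1/L)·∇²f(x(t))·ẋ(t) + ∇f(x(t)) = 0 for all t ≥ 0. Then f(x(t)) − f(x*) = O( e^{−(μ/(1−μ/L))·t} ) as t → ∞. -/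
open scoped RealInnerProductSpace

section SmoothConvex

variable {E : Type*} [NormedAddCommGroup E] [InnerProductSpace ℝ E] [CompleteSpace E]
  {f : E → ℝ} {L μ : ℝ}

/-- The chain rule along a curve, in terms of the gradient. -/
lemma hasDerivAt_comp_gradient (hf : Differentiable ℝ f) {x : ℝ → E} {v : E} {t : ℝ}
    (hx : HasDerivAt x v t) :
    HasDerivAt (fun s => f (x s)) ⟪gradient f (x t), v⟫ t := by
  exact ((hf (x t)).hasGradientAt.hasFDerivAt.comp_hasDerivAt t hx).congr_deriv (by simp)

/-- The descent lemma. -/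
lemma le_of_gradient_lipschitz (hf : Differentiable ℝ f)
    (hsmooth : ∀ y z : E, ‖gradient f y - gradient f z‖ ≤ L * ‖y - z‖) (y z : E) :
    f z ≤ f y + ⟪gradient f y, z - y⟫ + L / 2 * ‖z - y‖ ^ 2 := by
  set d := z - y with hd
  have hline : ∀ t : ℝ, HasDerivAt (fun s : ℝ => y + s • d) d t := fun t => by
    simpa using ((hasDerivAt_id t).smul_const d).const_add y
  have hder : ∀ t : ℝ, HasDerivAt
      (fun s : ℝ => f (y + s • d) - s * ⟪gradient f y, d⟫ - L / 2 * ‖d‖ ^ 2 * s ^ 2)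
      (⟪gradient f (y + t • d), d⟫ - ⟪gradient f y, d⟫ - L * ‖d‖ ^ 2 * t) t := fun t => by
    refine (((hasDerivAt_comp_gradient hf (hline t)).sub
      ((hasDerivAt_id t).mul_const ⟪gradient f y, d⟫)).sub
      (((hasDerivAt_id t).pow 2).const_mul (L / 2 * ‖d‖ ^ 2))).congr_deriv ?_
    simp
    ring
  have hanti := antitoneOn_of_hasDerivWithinAt_nonpos (convex_Icc (0 : ℝ) 1)
    (fun t _ => (hder t).continuousAt.continuousWithinAt)
    (fun t _ => (hder t).hasDerivWithinAt) (fun t ht => by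
      rw [interior_Icc] at ht
      have h1 := real_inner_le_norm (gradient f (y + t • d) - gradient f y) d
      have h2 := hsmooth (y + t • d) y
      rw [add_sub_cancel_left, norm_smul, Real.norm_of_nonneg ht.1.le] at h2
      have h3 := mul_le_mul_of_nonneg_right h2 (norm_nonneg d)
      rw [inner_sub_left] at h1
      nlinarith)
  have h := hanti (Set.left_mem_Icc.2 zero_le_one) (Set.right_mem_Icc.2 zero_le_one) zero_le_one
  have hz : y + d = z := by simp [hd]
  simp only [one_smul, zero_smul, hz, add_zero] at h
  linarith

/-- For a convex function with `L`-Lipschitz gradient, the first-order lower bound improves by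
`‖∇f(z) - ∇f(y)‖² / (2L)`. -/
lemma add_sq_norm_gradient_sub_le (hL : 0 < L) (hf : Differentiable ℝ f)
    (hconv : ∀ y z : E, f y + ⟪gradient f y, z - y⟫ ≤ f z)
    (hsmooth : ∀ y z : E, ‖gradient f y - gradient f z‖ ≤ L * ‖y - z‖) (y z : E) :
    f y + ⟪gradient f y, z - y⟫ + ‖gradient f z - gradient f y‖ ^ 2 / (2 * L) ≤ f z := by
  set Δ := gradient f z - gradient f y with hΔ
  have h1 := hconv y (z - (1 / L) • Δ)
  have h2 := le_of_gradient_lipschitz hf hsmooth z (z - (1 / L) • Δ)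
  have e1 : z - (1 / L) • Δ - y = (z - y) - (1 / L) • Δ := by abel
  have e2 : z - (1 / L) • Δ - z = -((1 / L) • Δ) := by abel
  have e3 : ⟪gradient f z, Δ⟫ - ⟪gradient f y, Δ⟫ = ‖Δ‖ ^ 2 := by
    rw [← inner_sub_left, ← hΔ, real_inner_self_eq_norm_sq]
  rw [e1, inner_sub_right, real_inner_smul_right] at h1
  rw [e2, inner_neg_right, real_inner_smul_right, norm_neg, norm_smul, mul_pow,
    Real.norm_of_nonneg (by positivity)] at h2
  have e4 : L / 2 * ((1 / L) ^ 2 * ‖Δ‖ ^ 2) = ‖Δ‖ ^ 2 / (2 * L) := by field_simp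
  have e5 : 1 / L * ⟪gradient f z, Δ⟫ - 1 / L * ⟪gradient f y, Δ⟫ = 2 * (‖Δ‖ ^ 2 / (2 * L)) := by
    rw [← mul_sub, e3]; field_simp
  linarith

/-- Cocoercivity of the gradient. -/
lemma sq_norm_gradient_sub_le_inner (hL : 0 < L) (hf : Differentiable ℝ f)
    (hconv : ∀ y z : E, f y + ⟪gradient f y, z - y⟫ ≤ f z)
    (hsmooth : ∀ y z : E, ‖gradient f y - gradient f z‖ ≤ L * ‖y - z‖) (y z : E) :
    ‖gradient f z - gradient f y‖ ^ 2 ≤ L * ⟪gradient f z - gradient f y, z - y⟫ := by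
  have h1 := add_sq_norm_gradient_sub_le hL hf hconv hsmooth y z
  have h2 := add_sq_norm_gradient_sub_le hL hf hconv hsmooth z y
  rw [norm_sub_rev, ← neg_sub z y, inner_neg_right] at h2
  have h3 : ‖gradient f z - gradient f y‖ ^ 2 / L ≤ ⟪gradient f z - gradient f y, z - y⟫ := by
    have e : ‖gradient f z - gradient f y‖ ^ 2 / L
        = 2 * (‖gradient f z - gradient f y‖ ^ 2 / (2 * L)) := by field_simp
    rw [inner_sub_left, e]
    linarith
  rwa [div_le_iff₀' hL] at h3

/-- Infinitesimal cocoercivity of the gradient along a differentiable curve. -/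
lemma sq_norm_deriv_gradient_le_inner (hL : 0 < L) (hf : Differentiable ℝ f)
    (hconv : ∀ y z : E, f y + ⟪gradient f y, z - y⟫ ≤ f z)
    (hsmooth : ∀ y z : E, ‖gradient f y - gradient f z‖ ≤ L * ‖y - z‖)
    {x : ℝ → E} {v H : E} {t : ℝ} (hx : HasDerivAt x v t)
    (hH : HasDerivAt (fun s => gradient f (x s)) H t) :
    ‖H‖ ^ 2 ≤ L * ⟪H, v⟫ := by
  rw [hasDerivAt_iff_tendsto_slope] at hx hH
  refine le_of_tendsto_of_tendsto' (hH.norm.pow 2) ((hH.inner hx).const_mul L) fun s => ?_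
  simp only [slope_def_module, norm_smul, mul_pow, real_inner_smul_left, real_inner_smul_right,
    Real.norm_eq_abs, sq_abs]
  have h := mul_le_mul_of_nonneg_left
    (sq_norm_gradient_sub_le_inner hL hf hconv hsmooth (x t) (x s)) (sq_nonneg (s - t)⁻¹)
  linarith

/-- The Polyak–Łojasiewicz inequality for strongly convex functions. -/
lemma two_mul_sub_le_sq_norm_gradient (hμ : 0 < μ)
    (hsc : ∀ y z : E, f z ≥ f y + ⟪gradient f y, z - y⟫ + μ / 2 * ‖z - y‖ ^ 2) (y z : E) :
    2 * μ * (f y - f z) ≤ ‖gradient f y‖ ^ 2 := by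
  have h1 := hsc y z
  have h2 := neg_le_of_abs_le (abs_real_inner_le_norm (gradient f y) (z - y))
  have h3 := mul_le_mul_of_nonneg_left (h1.le.trans' (add_le_add_left (add_le_add_right h2 _) _))
    hμ.le
  nlinarith [sq_nonneg (‖gradient f y‖ - μ * ‖z - y‖)]

end SmoothConvex

/-- For `0 < μ < L` and a twice continuously differentiable, `μ`-strongly
convex and `L`-smooth `f` with minimizer `x*`, any twice differentiable solution of
`ẋ(t) − (1/L)·∇²f(x(t))·ẋ(t) + ∇f(x(t)) = 0` satisfies
`f(x(t)) − f(x*) = O(e^{−(μ/(1−μ/L))·t})` as `t → ∞`. -/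
theorem first_order_hessian_flow_rate {n : ℕ}
    (μ L : ℝ) (hμ : 0 < μ) (hμL : μ < L)
    (f : EuclideanSpace ℝ (Fin n) → ℝ)
    (xstar : EuclideanSpace ℝ (Fin n))
    (hf : ContDiff ℝ 2 f)
    (hmin : ∀ y, f xstar ≤ f y)
    (hsc : ∀ y z : EuclideanSpace ℝ (Fin n),
      f z ≥ f y + ⟪gradient f y, z - y⟫ + μ / 2 * ‖z - y‖ ^ 2)
    (hsmooth : ∀ y z : EuclideanSpace ℝ (Fin n),
      ‖gradient f y - gradient f z‖ ≤ L * ‖y - z‖)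
    (x v a H : ℝ → EuclideanSpace ℝ (Fin n))
    (hx : ∀ t : ℝ, 0 ≤ t → HasDerivAt x (v t) t)
    (hv : ∀ t : ℝ, 0 ≤ t → HasDerivAt v (a t) t)
    (hH : ∀ t : ℝ, 0 ≤ t → HasDerivAt (fun s => gradient f (x s)) (H t) t)
    (hode : ∀ t : ℝ, 0 ≤ t → v t - (1 / L) • H t + gradient f (x t) = 0) :
    ∃ T C : ℝ, 0 < T ∧ 0 < C ∧
      ∀ t : ℝ, T ≤ t → f (x t) - f xstar ≤ C * Real.exp (-(μ / (1 - μ / L)) * t) := by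
  have hL : 0 < L := hμ.trans hμL
  have hd : Differentiable ℝ f := hf.differentiable (by norm_num)
  have hconv : ∀ y z, f y + ⟪gradient f y, z - y⟫ ≤ f z := fun y z => by
    have := hsc y z
    have : 0 ≤ μ / 2 * ‖z - y‖ ^ 2 := by positivity
    linarith
  have hgrad : gradient f xstar = 0 := by
    have : IsLocalMin f xstar := Filter.Eventually.of_forall hmin
    simp [gradient, this.fderiv_eq_zero]
  set g : ℝ → EuclideanSpace ℝ (Fin n) := fun s => gradient f (x s) with hg
  set V : ℝ → ℝ := fun s => f (x s) - f xstar - 1 / (2 * L) * ‖g s‖ ^ 2 with hV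
  have hvel : ∀ t, 0 ≤ t → v t = (1 / L) • H t - g t := fun t ht => by
    rw [← sub_eq_zero, ← hode t ht]
    abel
  have hV_nonneg : ∀ t, 0 ≤ V t := fun t => by
    have h := add_sq_norm_gradient_sub_le hL hd hconv hsmooth xstar (x t)
    rw [hgrad, inner_zero_left, sub_zero] at h
    simp only [hV, hg, one_div_mul_eq_div]
    linarith
  have hV_deriv : ∀ t, 0 ≤ t → HasDerivAt V (-‖g t‖ ^ 2) t := fun t ht => by
    refine (((hasDerivAt_comp_gradient hd (hx t ht)).sub_const (f xstar)).sub
      ((hH t ht).norm_sq.const_mul (1 / (2 * L)))).congr_deriv ?_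
    rw [hvel t ht, inner_sub_right, real_inner_smul_right, real_inner_self_eq_norm_sq]
    field_simp
    ring
  have hg_anti : AntitoneOn (fun s => ‖g s‖ ^ 2) (Set.Ici 0) := by
    refine antitoneOn_of_hasDerivWithinAt_nonpos (convex_Ici 0)
      (fun t ht => (hH t ht).norm_sq.continuousAt.continuousWithinAt)
      (fun t ht => (hH t (interior_subset ht)).norm_sq.hasDerivWithinAt) fun t ht => ?_
    have ht0 : 0 ≤ t := interior_subset ht
    have h := sq_norm_deriv_gradient_le_inner hL hd hconv hsmooth (hx t ht0) (hH t ht0)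
    rw [hvel t ht0, inner_sub_right, real_inner_smul_right, real_inner_self_eq_norm_sq,
      mul_sub, ← mul_assoc, mul_one_div_cancel hL.ne', one_mul, real_inner_comm] at h
    have : ⟪g t, H t⟫ ≤ 0 := by
      by_contra! hpos
      nlinarith [mul_pos hL hpos]
    linarith
  set m := μ / (1 - μ / L) with hm
  have hden : 0 < 1 - μ / L := by rw [sub_pos, div_lt_one hL]; exact hμL
  have hm_pos : 0 < m := div_pos hμ hden
  have hV_le : ∀ t, 2 * m * V t ≤ ‖g t‖ ^ 2 := fun t => by
    have h := two_mul_sub_le_sq_norm_gradient hμ hsc (x t) xstar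
    have e : 2 * m * V t = (2 * μ * V t) / (1 - μ / L) := by rw [hm]; ring
    rw [e, div_le_iff₀ hden]
    have e2 : 2 * μ * V t = 2 * μ * (f (x t) - f xstar) - ‖g t‖ ^ 2 * (μ / L) := by
      simp only [hV]; field_simp
    rw [e2, mul_sub (‖g t‖ ^ 2), mul_one]
    linarith
  have hV_decay : ∀ t, 0 ≤ t → V t ≤ V 0 * Real.exp (-(2 * m) * t) := by
    have hder : ∀ t, 0 ≤ t → HasDerivAt (fun s => Real.exp (2 * m * s) * V s)
        (Real.exp (2 * m * t) * (2 * m * V t - ‖g t‖ ^ 2)) t := fun t ht => by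
      refine (((hasDerivAt_id t).const_mul (2 * m)).exp.mul (hV_deriv t ht)).congr_deriv ?_
      simp
      ring
    have hanti : AntitoneOn (fun s => Real.exp (2 * m * s) * V s) (Set.Ici 0) :=
      antitoneOn_of_hasDerivWithinAt_nonpos (convex_Ici 0)
        (fun t ht => (hder t ht).continuousAt.continuousWithinAt)
        (fun t ht => (hder t (interior_subset ht)).hasDerivWithinAt)
        (fun t _ => mul_nonpos_of_nonneg_of_nonpos (Real.exp_pos _).le
          (sub_nonpos.2 (hV_le t)))
    intro t ht
    have h := hanti (Set.mem_Ici.2 le_rfl) (Set.mem_Ici.2 ht) ht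
    simp only [mul_zero, Real.exp_zero, one_mul] at h
    rwa [neg_mul, Real.exp_neg, ← div_eq_mul_inv, le_div_iff₀' (Real.exp_pos _)]
  have hg_le : ∀ t, 1 ≤ t → ‖g t‖ ^ 2 + V t ≤ V (t - 1) := fun t ht => by
    have hnn : ∀ s ∈ Set.Icc (t - 1) t, 0 ≤ s := fun s hs => by linarith [hs.1]
    have hder : ∀ s ∈ Set.Icc (t - 1) t, HasDerivAt (fun s => V s + ‖g t‖ ^ 2 * s)
        (-‖g s‖ ^ 2 + ‖g t‖ ^ 2) s := fun s hs => by
      exact ((hV_deriv s (hnn s hs)).add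
        ((hasDerivAt_id s).const_mul (‖g t‖ ^ 2))).congr_deriv (by simp)
    have hanti : AntitoneOn (fun s => V s + ‖g t‖ ^ 2 * s) (Set.Icc (t - 1) t) :=
      antitoneOn_of_hasDerivWithinAt_nonpos (convex_Icc _ _)
        (fun s hs => (hder s hs).continuousAt.continuousWithinAt)
        (fun s hs => (hder s (interior_subset hs)).hasDerivWithinAt)
        (fun s hs => by
          have hs' := interior_subset hs
          have := hg_anti (Set.mem_Ici.2 (hnn s hs')) (Set.mem_Ici.2 (by linarith)) hs'.2
          simp only at this
          linarith)
    have h := hanti (Set.left_mem_Icc.2 (by linarith)) (Set.right_mem_Icc.2 (by linarith))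
      (by linarith)
    simp only at h
    linarith
  refine ⟨1, (1 + 1 / (2 * L)) * (V 0 * Real.exp (2 * m)) + 1, one_pos, ?_, fun t ht => ?_⟩
  · have := hV_nonneg 0
    positivity
  have h0 := hV_nonneg 0
  have hc : 0 < 1 / (2 * L) := by positivity
  have hexp : Real.exp (-(2 * m) * (t - 1)) ≤ Real.exp (2 * m) * Real.exp (-m * t) := by
    rw [← Real.exp_add, Real.exp_le_exp]
    nlinarith
  have hB : V (t - 1) ≤ V 0 * Real.exp (2 * m) * Real.exp (-m * t) := by
    rw [mul_assoc]
    exact (hV_decay _ (by linarith)).trans (mul_le_mul_of_nonneg_left hexp h0)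
  have hg_t := hg_le t ht
  have hVt := hV_nonneg t
  calc f (x t) - f xstar = V t + 1 / (2 * L) * ‖g t‖ ^ 2 := by simp [hV]
    _ ≤ V (t - 1) + 1 / (2 * L) * V (t - 1) := by
      gcongr <;> nlinarith [sq_nonneg ‖g t‖]
    _ = (1 + 1 / (2 * L)) * V (t - 1) := by ring
    _ ≤ (1 + 1 / (2 * L)) * (V 0 * Real.exp (2 * m) * Real.exp (-m * t)) := by gcongr
    _ ≤ _ := by
      rw [add_mul, one_mul, mul_assoc]
      linarith [Real.exp_pos (-m * t)]
end

section
/- Let 0 < μ < L, let f : ℝⁿ → ℝ be twice continuously differentiable, μ-strongly convex and L-smooth with global minimizer x*, write f* = f(x*), and let x : [0,∞) → ℝⁿ be a twice differentiable solution of ẋ(t) − (1/L)·∇²f(x(t))·ẋ(t) + ∇f(x(t)) = 0. Set k = μ/(1 − μ/L). Then the function E(t) = (k/2)·e^{kt}·‖x(t) − x*‖² − (k/L)·e^{kt}·( f* − f(x(t)) + ⟨∇f(x(t)), x(t) − x*⟩ ) + e^{kt}·( f(x(t)) − f* ) is non-increasing on [0,∞) and satisfies E(t) ≥ e^{kt}·(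 f(x(t)) − f* ) for all t ≥ 0. -/
open scoped RealInnerProductSpace

section

variable {E : Type*} [NormedAddCommGroup E] [InnerProductSpace ℝ E] [CompleteSpace E]

/-- The chain rule along a curve, in terms of the gradient. -/
lemma HasDerivAt.comp_gradient {f : E → ℝ} (hf : Differentiable ℝ f) {x : ℝ → E} {v : E} {t : ℝ}
    (hx : HasDerivAt x v t) : HasDerivAt (fun s => f (x s)) ⟪gradient f (x t), v⟫ t := by
  have h := (hf (x t)).hasGradientAt.hasFDerivAt.comp_hasDerivAt t hx
  simpa using! h

/-- The descent lemma: a function with `L`-Lipschitz gradient lies below its quadratic upper model. -/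
lemma le_quadratic_of_gradient_lipschitz {f : E → ℝ} {L : ℝ} (hf : Differentiable ℝ f)
    (hsmooth : ∀ y z : E, ‖gradient f y - gradient f z‖ ≤ L * ‖y - z‖) (y z : E) :
    f z ≤ f y + ⟪gradient f y, z - y⟫ + L / 2 * ‖z - y‖ ^ 2 := by
  set w := z - y with hw
  have hderiv (s : ℝ) : HasDerivAt
      (fun s : ℝ => f (y + s • w) - s * ⟪gradient f y, w⟫ - L / 2 * s ^ 2 * ‖w‖ ^ 2)
      (⟪gradient f (y + s • w) - gradient f y, w⟫ - L * s * ‖w‖ ^ 2) s := by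
    have hline : HasDerivAt (fun s : ℝ => y + s • w) w s := by
      simpa using ((hasDerivAt_id s).smul_const w).const_add y
    have h := ((hline.comp_gradient hf).sub
      ((hasDerivAt_id s).mul_const ⟪gradient f y, w⟫)).sub
      ((((hasDerivAt_id s).pow 2).const_mul (L / 2)).mul_const (‖w‖ ^ 2))
    refine h.congr_deriv ?_
    simp only [inner_sub_left, id_eq, Nat.cast_ofNat, Nat.add_one_sub_one, pow_one]
    ring
  have hanti := antitoneOn_of_hasDerivWithinAt_nonpos (convex_Icc (0 : ℝ) 1)
    (fun s _ => (hderiv s).continuousAt.continuousWithinAt)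
    (fun s _ => (hderiv s).hasDerivWithinAt) (fun s hs => by
      rw [interior_Icc] at hs
      have hg := hsmooth (y + s • w) y
      rw [add_sub_cancel_left, norm_smul, Real.norm_of_nonneg hs.1.le] at hg
      have hi := real_inner_le_norm (gradient f (y + s • w) - gradient f y) w
      nlinarith [mul_le_mul_of_nonneg_right hg (norm_nonneg w)])
  have h := hanti (Set.left_mem_Icc.2 zero_le_one) (Set.right_mem_Icc.2 zero_le_one) zero_le_one
  have hyz : y + w = z := by simp [hw]
  simp only [one_smul, zero_smul, hyz, add_zero] at h
  linarith

/-- A Lipschitz bound transfers to derivatives along a curve. -/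
lemma norm_deriv_comp_le_of_lipschitz {F G : Type*} [NormedAddCommGroup F] [NormedSpace ℝ F]
    [NormedAddCommGroup G] [NormedSpace ℝ G] {φ : F → G} {L : ℝ}
    (hφ : ∀ y z : F, ‖φ y - φ z‖ ≤ L * ‖y - z‖) {x : ℝ → F} {v : F} {w : G} {t : ℝ}
    (hx : HasDerivAt x v t) (hw : HasDerivAt (fun s => φ (x s)) w t) : ‖w‖ ≤ L * ‖v‖ := by
  refine le_of_tendsto_of_tendsto' (hasDerivAt_iff_tendsto_slope.1 hw).norm
    ((hasDerivAt_iff_tendsto_slope.1 hx).norm.const_mul L) fun s => ?_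
  simp only [slope_def_module, norm_smul]
  nlinarith [mul_le_mul_of_nonneg_left (hφ (x s) (x t)) (norm_nonneg (s - t)⁻¹)]

end

/-- Lyapunov function for the flow `ẋ − (1/L)∇²f(x)ẋ + ∇f(x) = 0`:
with `k = μ/(1 − μ/L)`, the function
`E(t) = (k/2)e^{kt}‖x(t) − x*‖² − (k/L)e^{kt}(f* − f(x(t)) + ⟨∇f(x(t)), x(t) − x*⟩)
       + e^{kt}(f(x(t)) − f*)`
is non-increasing on `[0,∞)` and dominates `e^{kt}(f(x(t)) − f*)`. -/
theorem first_order_hessian_flow_lyapunov {n : ℕ}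
    (μ L : ℝ) (hμ : 0 < μ) (hμL : μ < L)
    (f : EuclideanSpace ℝ (Fin n) → ℝ)
    (xstar : EuclideanSpace ℝ (Fin n))
    (hf : ContDiff ℝ 2 f)
    (hmin : ∀ y, f xstar ≤ f y)
    (hsc : ∀ y z : EuclideanSpace ℝ (Fin n),
      f z ≥ f y + ⟪gradient f y, z - y⟫ + μ / 2 * ‖z - y‖ ^ 2)
    (hsmooth : ∀ y z : EuclideanSpace ℝ (Fin n),
      ‖gradient f y - gradient f z‖ ≤ L * ‖y - z‖)
    (x v a H : ℝ → EuclideanSpace ℝ (Fin n))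
    (hx : ∀ t : ℝ, 0 ≤ t → HasDerivAt x (v t) t)
    (hv : ∀ t : ℝ, 0 ≤ t → HasDerivAt v (a t) t)
    (hH : ∀ t : ℝ, 0 ≤ t → HasDerivAt (fun s => gradient f (x s)) (H t) t)
    (hode : ∀ t : ℝ, 0 ≤ t → v t - (1 / L) • H t + gradient f (x t) = 0)
    (k : ℝ) (hk : k = μ / (1 - μ / L)) :
    AntitoneOn (fun t : ℝ =>
        k / 2 * Real.exp (k * t) * ‖x t - xstar‖ ^ 2
          - k / L * Real.exp (k * t) *
              (f xstar - f (x t) + ⟪gradient f (x t), x t - xstar⟫)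
          + Real.exp (k * t) * (f (x t) - f xstar)) (Set.Ici (0 : ℝ))
      ∧ ∀ t : ℝ, 0 ≤ t →
        k / 2 * Real.exp (k * t) * ‖x t - xstar‖ ^ 2
          - k / L * Real.exp (k * t) *
              (f xstar - f (x t) + ⟪gradient f (x t), x t - xstar⟫)
          + Real.exp (k * t) * (f (x t) - f xstar)
        ≥ Real.exp (k * t) * (f (x t) - f xstar) := by
  have hL : 0 < L := hμ.trans hμL
  have hden : 0 < 1 - μ / L := by rw [sub_pos, div_lt_one hL]; exact hμL
  have hk0 : 0 < k := hk ▸ div_pos hμ hden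
  have hkμ : (k / L + 1) * μ = k := by
    have h : k * (1 - μ / L) = μ := by rw [hk, div_mul_cancel₀ _ hden.ne']
    linear_combination -h
  have hdiff : Differentiable ℝ f := hf.differentiable (by norm_num)
  refine ⟨?_, fun t _ => ?_⟩
  · have hderiv (t : ℝ) (ht : 0 ≤ t) := by
      have hexp : HasDerivAt (fun s : ℝ => Real.exp (k * s)) (Real.exp (k * t) * k) t := by
        simpa using ((hasDerivAt_id t).const_mul k).exp
      have hd := (hx t ht).sub_const xstar
      have hfx := (hx t ht).comp_gradient hdiff
      exact (((hexp.const_mul (k / 2)).mul hd.norm_sq).sub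
        ((hexp.const_mul (k / L)).mul
          ((hfx.const_sub (f xstar)).add ((hH t ht).inner ℝ hd)))).add
        (hexp.mul (hfx.sub_const (f xstar)))
    refine antitoneOn_of_hasDerivWithinAt_nonpos (convex_Ici (0 : ℝ))
      (fun t ht => (hderiv t ht).continuousAt.continuousWithinAt)
      (fun t ht => (hderiv t (interior_subset ht)).hasDerivWithinAt) fun t ht => ?_
    replace ht : 0 ≤ t := interior_subset ht
    have hg : gradient f (x t) = (1 / L) • H t - v t := by
      rw [← sub_eq_zero, ← hode t ht]; abel
    have hdissip : ⟪gradient f (x t), v t⟫ ≤ 0 := by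
      have hHv := norm_deriv_comp_le_of_lipschitz hsmooth (hx t ht) (hH t ht)
      have hi : ⟪H t, v t⟫ ≤ L * ‖v t‖ ^ 2 := (real_inner_le_norm _ _).trans
        (by nlinarith [mul_le_mul_of_nonneg_right hHv (norm_nonneg (v t))])
      rw [hg, inner_sub_left, real_inner_smul_left, real_inner_self_eq_norm_sq, sub_nonpos,
        one_div, inv_mul_le_iff₀ hL]
      exact hi
    have hflow : ⟪x t - xstar, v t⟫ - 1 / L * ⟪H t, x t - xstar⟫
        = -⟪gradient f (x t), x t - xstar⟫ := by
      rw [hg, inner_sub_left _ (v t), real_inner_smul_left, real_inner_comm (v t)]; ring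
    have hconv := hsc (x t) xstar
    rw [← neg_sub (x t) xstar, inner_neg_right, norm_neg] at hconv
    have hbregman : k * (k / 2 * ‖x t - xstar‖ ^ 2) ≤ k * ((k / L + 1) *
        (f xstar - f (x t) + ⟪gradient f (x t), x t - xstar⟫)) := by
      refine mul_le_mul_of_nonneg_left ?_ hk0.le
      calc k / 2 * ‖x t - xstar‖ ^ 2 = (k / L + 1) * (μ / 2 * ‖x t - xstar‖ ^ 2) := by
            linear_combination (-‖x t - xstar‖ ^ 2 / 2) * hkμ
        _ ≤ _ := mul_le_mul_of_nonneg_left (by linarith) (by positivity)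
    have hbracket := mul_nonpos_of_nonneg_of_nonpos (Real.exp_pos (k * t)).le
      (add_nonpos (sub_nonpos.2 hbregman) hdissip)
    refine le_of_eq_of_le ?_ hbracket
    simp only [Pi.add_apply]
    linear_combination (k * Real.exp (k * t)) * hflow
  · have hdescent := le_quadratic_of_gradient_lipschitz hdiff hsmooth (x t) xstar
    rw [← neg_sub (x t) xstar, inner_neg_right, norm_neg] at hdescent
    have hupper : k / L * Real.exp (k * t) *
        (f xstar - f (x t) + ⟪gradient f (x t), x t - xstar⟫) ≤
        k / L * Real.exp (k * t) * (L / 2 * ‖x t - xstar‖ ^ 2) :=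
      mul_le_mul_of_nonneg_left (by linarith) (by positivity)
    have hcancel : k / L * Real.exp (k * t) * (L / 2 * ‖x t - xstar‖ ^ 2) =
        k / 2 * Real.exp (k * t) * ‖x t - xstar‖ ^ 2 := by field_simp
    linarith
end

section
/- Let μ > 0 and let f : ℝⁿ → ℝ be a continuously differentiable μ-strongly convex function with global minimizer x*. Let x : [0,∞) → ℝⁿ be a differentiable solution of the gradient flow ẋ(t) + ∇f(x(t)) = 0 for all t ≥ 0. Then f(x(t)) − f(x*) = O( e^{−2μt} ) as t → ∞. -/
open scoped RealInnerProductSpace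

/-- A strongly convex function satisfies the Polyak–Łojasiewicz inequality. -/
theorem polyak_lojasiewicz_of_strongly_convex {E : Type*} [NormedAddCommGroup E]
    [InnerProductSpace ℝ E] [CompleteSpace E] {μ : ℝ} (hμ : 0 < μ) {f : E → ℝ}
    (hsc : ∀ y z : E, f z ≥ f y + ⟪gradient f y, z - y⟫ + μ / 2 * ‖z - y‖ ^ 2) (y z : E) :
    2 * μ * (f y - f z) ≤ ‖gradient f y‖ ^ 2 := by
  have hsq : 0 ≤ ‖gradient f y + μ • (z - y)‖ ^ 2 := sq_nonneg _
  rw [norm_add_sq_real, inner_smul_right, norm_smul, Real.norm_of_nonneg hμ.le, mul_pow] at hsq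
  have hmul := mul_le_mul_of_nonneg_left (hsc y z) (by positivity : 0 ≤ 2 * μ)
  linarith

/-- Along a gradient flow, the derivative of the objective is minus the squared gradient norm. -/
theorem hasDerivAt_comp_of_gradient_flow {E : Type*} [NormedAddCommGroup E]
    [InnerProductSpace ℝ E] [CompleteSpace E] {f : E → ℝ} {x : ℝ → E} {t : ℝ}
    (hf : DifferentiableAt ℝ f (x t)) (hx : HasDerivAt x (-gradient f (x t)) t) :
    HasDerivAt (fun s => f (x s)) (-‖gradient f (x t)‖ ^ 2) t := by
  have h := hf.hasGradientAt.hasFDerivAt.comp_hasDerivAt t hx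
  rwa [InnerProductSpace.toDual_apply_apply, inner_neg_right, real_inner_self_eq_norm_sq] at h

/-- For `μ > 0` and a continuously differentiable `μ`-strongly convex `f`
with minimizer `x*`, any differentiable solution of the gradient flow
`ẋ(t) + ∇f(x(t)) = 0` satisfies `f(x(t)) − f(x*) = O(e^{−2μt})` as `t → ∞`. -/
theorem gradient_flow_rate {n : ℕ}
    (μ : ℝ) (hμ : 0 < μ)
    (f : EuclideanSpace ℝ (Fin n) → ℝ)
    (xstar : EuclideanSpace ℝ (Fin n))
    (hf : ContDiff ℝ 1 f)
    (hmin : ∀ y, f xstar ≤ f y)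
    (hsc : ∀ y z : EuclideanSpace ℝ (Fin n),
      f z ≥ f y + ⟪gradient f y, z - y⟫ + μ / 2 * ‖z - y‖ ^ 2)
    (x v : ℝ → EuclideanSpace ℝ (Fin n))
    (hx : ∀ t : ℝ, 0 ≤ t → HasDerivAt x (v t) t)
    (hode : ∀ t : ℝ, 0 ≤ t → v t + gradient f (x t) = 0) :
    ∃ T C : ℝ, 0 < T ∧ 0 < C ∧
      ∀ t : ℝ, T ≤ t → f (x t) - f xstar ≤ C * Real.exp (-(2 * μ) * t) := by
  have hderiv : ∀ t : ℝ, 0 ≤ t → HasDerivAt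
      (fun s => Real.exp (2 * μ * s) * (f (x s) - f xstar))
      (Real.exp (2 * μ * t) * (2 * μ) * (f (x t) - f xstar) +
        Real.exp (2 * μ * t) * -‖gradient f (x t)‖ ^ 2) t := by
    intro t ht
    have hflow := hx t ht
    rw [eq_neg_of_add_eq_zero_left (hode t ht)] at hflow
    have hfx := hasDerivAt_comp_of_gradient_flow (hf.differentiable one_ne_zero _) hflow
    have hexp : HasDerivAt (fun s => Real.exp (2 * μ * s)) (Real.exp (2 * μ * t) * (2 * μ)) t := by
      simpa using ((hasDerivAt_id t).const_mul (2 * μ)).exp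
    exact hexp.mul (hfx.sub_const _)
  have hanti : AntitoneOn (fun s => Real.exp (2 * μ * s) * (f (x s) - f xstar)) (Set.Ici 0) := by
    refine antitoneOn_of_hasDerivWithinAt_nonpos (convex_Ici 0)
      (fun t ht => (hderiv t ht).continuousAt.continuousWithinAt)
      (fun t ht => (hderiv t (interior_subset ht)).hasDerivWithinAt) fun t _ => ?_
    have hpl := mul_le_mul_of_nonneg_left
      (polyak_lojasiewicz_of_strongly_convex hμ hsc (x t) xstar) (Real.exp_pos (2 * μ * t)).le
    linarith
  refine ⟨1, f (x 0) - f xstar + 1, one_pos, by linarith [hmin (x 0)], fun t ht => ?_⟩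
  have hle := hanti Set.self_mem_Ici (zero_le_one.trans ht : (0 : ℝ) ≤ t) (zero_le_one.trans ht)
  simp only [mul_zero, Real.exp_zero, one_mul] at hle
  rw [neg_mul, Real.exp_neg, ← div_eq_mul_inv, le_div_iff₀ (Real.exp_pos _)]
  linarith
end

section
/- Let μ > 0 and let f : ℝⁿ → ℝ be a continuously differentiable μ-strongly convex function with global minimizer x*. Let x : [0,∞) → ℝⁿ be a twice differentiable solution of ẍ(t) + 2√μ·ẋ(t) + ∇f(x(t)) = 0 for all t ≥ 0. Then f(x(t)) − f(x*) = O( e^{−√μ·t} ) as t → ∞. -/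
open scoped RealInnerProductSpace

section StronglyConvexFlow

variable {E : Type*} [NormedAddCommGroup E] [InnerProductSpace ℝ E]

/-- The Lyapunov function of the flow `ẍ + 2s ẋ + ∇f(x) = 0`. -/
noncomputable def flowLyapunov (s : ℝ) (f : E → ℝ) (xstar : E) (x v : ℝ → E) (t : ℝ) : ℝ :=
  Real.exp (s * t) * (f (x t) - f xstar + 1 / 2 * ‖v t + s • (x t - xstar)‖ ^ 2)

theorem hasDerivAt_flowLyapunov [CompleteSpace E] {s t : ℝ} {f : E → ℝ} {xstar a : E}
    {x v : ℝ → E} (hf : DifferentiableAt ℝ f (x t)) (hx : HasDerivAt x (v t) t)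
    (hv : HasDerivAt v a t) (hode : a + (2 * s) • v t + gradient f (x t) = 0) :
    HasDerivAt (flowLyapunov s f xstar x v)
      (s * Real.exp (s * t) * (f (x t) - f xstar + ⟪gradient f (x t), xstar - x t⟫
        + s ^ 2 / 2 * ‖xstar - x t‖ ^ 2 - 1 / 2 * ‖v t‖ ^ 2)) t := by
  have hfx : HasDerivAt (fun r => f (x r)) ⟪gradient f (x t), v t⟫ t :=
    hf.hasGradientAt.hasFDerivAt.comp_hasDerivAt t hx
  have hw : HasDerivAt (fun r => v r + s • (x r - xstar)) (a + s • v t) t :=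
    hv.add ((hx.sub_const xstar).const_smul s)
  have hexp : HasDerivAt (fun r => Real.exp (s * r)) (Real.exp (s * t) * s) t := by
    simpa using ((hasDerivAt_id t).const_mul s).exp
  refine (hexp.mul ((hfx.sub_const (f xstar)).add (hw.norm_sq.const_mul (1 / 2)))).congr_deriv ?_
  have ha : a + s • v t = -(s • v t) - gradient f (x t) := by
    rw [eq_sub_iff_add_eq, ← sub_eq_zero, ← hode]
    module
  have hd : xstar - x t = -(x t - xstar) := (neg_sub _ _).symm
  simp only [Pi.add_apply, ha, hd]
  generalize x t - xstar = d
  generalize gradient f (x t) = g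
  simp only [← real_inner_self_eq_norm_sq, inner_add_left, inner_add_right,
    inner_sub_right, inner_neg_left, inner_neg_right, real_inner_smul_left, real_inner_smul_right]
  rw [real_inner_comm (v t) g, real_inner_comm d g, real_inner_comm (v t) d]
  ring

theorem antitoneOn_flowLyapunov [CompleteSpace E] {s : ℝ} (hs : 0 ≤ s) {f : E → ℝ} {xstar : E}
    (hf : Differentiable ℝ f)
    (hsc : ∀ y, f y + ⟪gradient f y, xstar - y⟫ + s ^ 2 / 2 * ‖xstar - y‖ ^ 2 ≤ f xstar)
    {x v a : ℝ → E} (hx : ∀ t, 0 ≤ t → HasDerivAt x (v t) t)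
    (hv : ∀ t, 0 ≤ t → HasDerivAt v (a t) t)
    (hode : ∀ t, 0 ≤ t → a t + (2 * s) • v t + gradient f (x t) = 0) :
    AntitoneOn (flowLyapunov s f xstar x v) (Set.Ici 0) := by
  have hderiv : ∀ t, 0 ≤ t → HasDerivAt (flowLyapunov s f xstar x v) _ t := fun t ht =>
    hasDerivAt_flowLyapunov (hf (x t)) (hx t ht) (hv t ht) (hode t ht)
  refine antitoneOn_of_hasDerivWithinAt_nonpos (convex_Ici 0)
    (fun t ht => (hderiv t ht).continuousAt.continuousWithinAt)
    (fun t ht => (hderiv t (interior_subset ht)).hasDerivWithinAt) fun t _ => ?_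
  refine mul_nonpos_of_nonneg_of_nonpos (mul_nonneg hs (Real.exp_nonneg _)) ?_
  linarith [hsc (x t), sq_nonneg ‖v t‖]

end StronglyConvexFlow

/-- For `μ > 0` and a continuously differentiable `μ`-strongly convex `f`
with minimizer `x*`, any twice differentiable solution of
`ẍ(t) + 2√μ·ẋ(t) + ∇f(x(t)) = 0` satisfies `f(x(t)) − f(x*) = O(e^{−√μ·t})`. -/
theorem sc_nag_flow_rate {n : ℕ}
    (μ : ℝ) (hμ : 0 < μ)
    (f : EuclideanSpace ℝ (Fin n) → ℝ)
    (xstar : EuclideanSpace ℝ (Fin n))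
    (hf : ContDiff ℝ 1 f)
    (hmin : ∀ y, f xstar ≤ f y)
    (hsc : ∀ y z : EuclideanSpace ℝ (Fin n),
      f z ≥ f y + ⟪gradient f y, z - y⟫ + μ / 2 * ‖z - y‖ ^ 2)
    (x v a : ℝ → EuclideanSpace ℝ (Fin n))
    (hx : ∀ t : ℝ, 0 ≤ t → HasDerivAt x (v t) t)
    (hv : ∀ t : ℝ, 0 ≤ t → HasDerivAt v (a t) t)
    (hode : ∀ t : ℝ, 0 ≤ t →
      a t + (2 * Real.sqrt μ) • v t + gradient f (x t) = 0) :
    ∃ T C : ℝ, 0 < T ∧ 0 < C ∧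
      ∀ t : ℝ, T ≤ t → f (x t) - f xstar ≤ C * Real.exp (-Real.sqrt μ * t) := by
  set s := Real.sqrt μ with hs
  have hs2 : s ^ 2 = μ := Real.sq_sqrt hμ.le
  have hanti := antitoneOn_flowLyapunov (Real.sqrt_nonneg μ) (hf.differentiable one_ne_zero)
    (fun y => by rw [← hs, hs2]; exact hsc y xstar) hx hv hode
  refine ⟨1, |flowLyapunov s f xstar x v 0| + 1, one_pos, by positivity, fun t ht => ?_⟩
  have ht0 : (0 : ℝ) ≤ t := zero_le_one.trans ht
  have hle : flowLyapunov s f xstar x v t ≤ |flowLyapunov s f xstar x v 0| + 1 :=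
    (hanti Set.self_mem_Ici ht0 ht0).trans
      ((le_abs_self _).trans (le_add_of_nonneg_right zero_le_one))
  have hexp : Real.exp (s * t) * (f (x t) - f xstar) ≤ flowLyapunov s f xstar x v t :=
    mul_le_mul_of_nonneg_left (le_add_of_nonneg_right (by positivity)) (Real.exp_nonneg _)
  rw [neg_mul, Real.exp_neg, ← div_eq_mul_inv, le_div_iff₀' (Real.exp_pos _)]
  exact hexp.trans hle
end

section
/- Let μ > 0, let f : ℝⁿ → ℝ be a continuously differentiable μ-strongly convex function with global minimizer x*, write f* = f(x*), and let x : [0,∞) → ℝⁿ be a twice differentiable solution of ẍ(t) + 2√μ·ẋ(t) + ∇f(x(t)) = 0. Then the function E(t) = (1/2)·e^{√μ·t}·‖ẋ(t) + √μ·(x(t) − x*)‖² + e^{√μ·t}·( f(x(t)) − f* ) is non-increasing on [0,∞). -/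
open scoped RealInnerProductSpace

/-- Lyapunov function for the SC-NAG flow `ẍ + 2√μ·ẋ + ∇f(x) = 0`:
`E(t) = (1/2)e^{√μ·t}‖ẋ(t) + √μ(x(t) − x*)‖² + e^{√μ·t}(f(x(t)) − f*)` is
non-increasing on `[0,∞)`. -/
theorem sc_nag_flow_lyapunov {n : ℕ}
    (μ : ℝ) (hμ : 0 < μ)
    (f : EuclideanSpace ℝ (Fin n) → ℝ)
    (xstar : EuclideanSpace ℝ (Fin n))
    (hf : ContDiff ℝ 1 f)
    (hmin : ∀ y, f xstar ≤ f y)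
    (hsc : ∀ y z : EuclideanSpace ℝ (Fin n),
      f z ≥ f y + ⟪gradient f y, z - y⟫ + μ / 2 * ‖z - y‖ ^ 2)
    (x v a : ℝ → EuclideanSpace ℝ (Fin n))
    (hx : ∀ t : ℝ, 0 ≤ t → HasDerivAt x (v t) t)
    (hv : ∀ t : ℝ, 0 ≤ t → HasDerivAt v (a t) t)
    (hode : ∀ t : ℝ, 0 ≤ t →
      a t + (2 * Real.sqrt μ) • v t + gradient f (x t) = 0) :
    AntitoneOn (fun t : ℝ =>
        1 / 2 * Real.exp (Real.sqrt μ * t) *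
            ‖v t + Real.sqrt μ • (x t - xstar)‖ ^ 2
          + Real.exp (Real.sqrt μ * t) * (f (x t) - f xstar))
      (Set.Ici (0 : ℝ)) := by
  have hderiv : ∀ t : ℝ, 0 ≤ t → HasDerivAt (fun t : ℝ =>
        1 / 2 * Real.exp (Real.sqrt μ * t) *
            ‖v t + Real.sqrt μ • (x t - xstar)‖ ^ 2
          + Real.exp (Real.sqrt μ * t) * (f (x t) - f xstar))
      (Real.exp (Real.sqrt μ * t) *
        (Real.sqrt μ / 2 * ‖v t + Real.sqrt μ • (x t - xstar)‖ ^ 2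
          + ⟪v t + Real.sqrt μ • (x t - xstar), a t + Real.sqrt μ • v t⟫
          + Real.sqrt μ * (f (x t) - f xstar) + ⟪gradient f (x t), v t⟫)) t := by
    intro t ht
    have hexp : HasDerivAt (fun t : ℝ => Real.exp (Real.sqrt μ * t))
        (Real.exp (Real.sqrt μ * t) * Real.sqrt μ) t := by
      simpa using ((hasDerivAt_id t).const_mul (Real.sqrt μ)).exp
    have hw : HasDerivAt (fun t => v t + Real.sqrt μ • (x t - xstar))
        (a t + Real.sqrt μ • v t) t :=
      (hv t ht).add (((hx t ht).sub_const xstar).const_smul (Real.sqrt μ))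
    have hfx : HasDerivAt (fun t => f (x t)) ⟪gradient f (x t), v t⟫ t := by
      have hgrad := ((hf.differentiable one_ne_zero) (x t)).hasGradientAt.hasFDerivAt
      exact hgrad.comp_hasDerivAt t (hx t ht)
    refine (((hexp.const_mul (1 / 2)).mul hw.norm_sq).add
      (hexp.mul (hfx.sub_const (f xstar)))).congr_deriv ?_
    ring
  refine antitoneOn_of_hasDerivWithinAt_nonpos (convex_Ici 0)
    (fun t ht => (hderiv t ht).continuousAt.continuousWithinAt)
    (fun t ht => (hderiv t (interior_subset ht)).hasDerivWithinAt) ?_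
  intro t ht
  have ht0 : 0 ≤ t := interior_subset ht
  refine mul_nonpos_of_nonneg_of_nonpos (Real.exp_pos _).le ?_
  have ha : a t + Real.sqrt μ • v t = -(Real.sqrt μ • v t + gradient f (x t)) := by
    have hdecomp : a t + Real.sqrt μ • v t + (Real.sqrt μ • v t + gradient f (x t))
        = a t + (2 * Real.sqrt μ) • v t + gradient f (x t) := by module
    exact eq_neg_of_add_eq_zero_left (hdecomp.trans (hode t ht0))
  have hconv := hsc (x t) xstar
  rw [← neg_sub (x t) xstar, inner_neg_right, norm_neg] at hconv
  rw [ha]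
  generalize x t - xstar = d at hconv ⊢
  have hs : Real.sqrt μ ^ 2 = μ := Real.sq_sqrt hμ.le
  have hs0 : 0 ≤ Real.sqrt μ := Real.sqrt_nonneg μ
  generalize Real.sqrt μ = s at hs hs0 ⊢
  subst hs
  rw [← real_inner_self_eq_norm_sq] at hconv ⊢
  simp only [inner_add_left, inner_add_right, inner_neg_right, real_inner_smul_left,
    real_inner_smul_right]
  rw [real_inner_comm d (gradient f (x t))] at hconv
  rw [real_inner_comm (v t) d, real_inner_comm (v t) (gradient f (x t))]
  have hvv : 0 ≤ ⟪v t, v t⟫ := real_inner_self_nonneg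
  nlinarith [mul_le_mul_of_nonneg_left hconv hs0, mul_nonneg hs0 hvv]
end

section
/- Let μ > 0 and let f : ℝⁿ → ℝ be a twice continuously differentiable μ-strongly convex function with global minimizer x*. Let x : [0,∞) → ℝⁿ be a twice differentiable solution of ẍ(t) + √μ·ẋ(t) + (1/√μ)·∇²f(x(t))·ẋ(t) + ∇f(x(t)) = 0 for all t ≥ 0. Then f(x(t)) − f(x*) = O( e^{−√μ·t} ) as t → ∞. -/
open scoped RealInnerProductSpace

section GradientInequalities

variable {E : Type*} [NormedAddCommGroup E] [InnerProductSpace ℝ E]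

/-- Completing the square: `-‖g‖² / (2μ)` is the minimum of `d ↦ ⟪g, d⟫ + μ/2 ‖d‖²`. -/
lemma neg_norm_sq_le_two_mul_inner_add (μ : ℝ) (g d : E) :
    -‖g‖ ^ 2 ≤ 2 * μ * (⟪g, d⟫ + μ / 2 * ‖d‖ ^ 2) := by
  have h := norm_add_sq_real g (μ • d)
  rw [real_inner_smul_right, norm_smul, mul_pow, Real.norm_eq_abs, sq_abs] at h
  nlinarith [sq_nonneg ‖g + μ • d‖]

/-- The chain rule along a curve, in terms of the gradient. -/
lemma HasGradientAt.comp_hasDerivAt_inner [CompleteSpace E] {f : E → ℝ} {g v : E} {x : ℝ → E}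
    {t : ℝ} (hf : HasGradientAt f g (x t)) (hx : HasDerivAt x v t) :
    HasDerivAt (fun r => f (x r)) ⟪g, v⟫ t := by
  exact (hf.hasFDerivAt.comp_hasDerivAt t hx).congr_deriv (by simp)

end GradientInequalities

/-- For `μ > 0` and a twice continuously differentiable `μ`-strongly convex
`f` with minimizer `x*`, any twice differentiable solution of
`ẍ(t) + √μ·ẋ(t) + (1/√μ)·∇²f(x(t))·ẋ(t) + ∇f(x(t)) = 0` satisfies
`f(x(t)) − f(x*) = O(e^{−√μ·t})`. -/
theorem second_order_hessian_flow_rate {n : ℕ}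
    (μ : ℝ) (hμ : 0 < μ)
    (f : EuclideanSpace ℝ (Fin n) → ℝ)
    (xstar : EuclideanSpace ℝ (Fin n))
    (hf : ContDiff ℝ 2 f)
    (hmin : ∀ y, f xstar ≤ f y)
    (hsc : ∀ y z : EuclideanSpace ℝ (Fin n),
      f z ≥ f y + ⟪gradient f y, z - y⟫ + μ / 2 * ‖z - y‖ ^ 2)
    (x v a H : ℝ → EuclideanSpace ℝ (Fin n))
    (hx : ∀ t : ℝ, 0 ≤ t → HasDerivAt x (v t) t)
    (hv : ∀ t : ℝ, 0 ≤ t → HasDerivAt v (a t) t)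
    (hH : ∀ t : ℝ, 0 ≤ t → HasDerivAt (fun s => gradient f (x s)) (H t) t)
    (hode : ∀ t : ℝ, 0 ≤ t →
      a t + Real.sqrt μ • v t + (1 / Real.sqrt μ) • H t + gradient f (x t) = 0) :
    ∃ T C : ℝ, 0 < T ∧ 0 < C ∧
      ∀ t : ℝ, T ≤ t → f (x t) - f xstar ≤ C * Real.exp (-Real.sqrt μ * t) := by
  obtain ⟨s, hs, rfl⟩ : ∃ s : ℝ, 0 < s ∧ μ = s ^ 2 :=
    ⟨√μ, Real.sqrt_pos.2 hμ, (Real.sq_sqrt hμ.le).symm⟩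
  rw [Real.sqrt_sq hs.le] at *
  let w : ℝ → EuclideanSpace ℝ (Fin n) := fun t => v t + (1 / s) • gradient f (x t)
  -- The equation says that `w` solves `w' = -s w`.
  have hw : ∀ t, 0 ≤ t → HasDerivAt w (-(s • w t)) t := by
    intro t ht
    refine ((hv t ht).add ((hH t ht).const_smul (1 / s))).congr_deriv ?_
    have hsg : s • (1 / s) • gradient f (x t) = gradient f (x t) := by
      rw [smul_smul, mul_one_div_cancel hs.ne', one_smul]
    rw [eq_neg_iff_add_eq_zero, smul_add, hsg, ← hode t ht]
    abel
  have hgrad : ∀ y, HasGradientAt f (gradient f y) y := fun y =>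
    (hf.differentiable (by norm_num) y).hasGradientAt
  let L : ℝ → ℝ := fun t => Real.exp (s * t) * (f (x t) - f xstar + 1 / 2 * ‖w t‖ ^ 2)
  have hL : ∀ t, 0 ≤ t → HasDerivAt L
      (Real.exp (s * t) * (s * (f (x t) - f xstar) - s / 2 * ‖w t‖ ^ 2
        + ⟪gradient f (x t), v t⟫)) t := by
    intro t ht
    have hexp : HasDerivAt (fun r : ℝ => Real.exp (s * r)) (Real.exp (s * t) * s) t := by
      simpa using ((hasDerivAt_id t).const_mul s).exp
    have hfx := (hgrad (x t)).comp_hasDerivAt_inner (hx t ht)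
    refine (hexp.mul ((hfx.sub_const (f xstar)).add
      ((hw t ht).norm_sq.const_mul (1 / 2)))).congr_deriv ?_
    rw [inner_neg_right, real_inner_smul_right, real_inner_self_eq_norm_sq]
    simp only [Pi.add_apply]
    ring
  have hL_nonpos : ∀ t, 0 ≤ t → Real.exp (s * t) * (s * (f (x t) - f xstar)
      - s / 2 * ‖w t‖ ^ 2 + ⟪gradient f (x t), v t⟫) ≤ 0 := by
    intro t ht
    refine mul_nonpos_of_nonneg_of_nonpos (Real.exp_pos _).le ?_
    set g := gradient f (x t) with hg
    have hsq : s ^ 2 * ‖w t‖ ^ 2 = s ^ 2 * ‖v t‖ ^ 2 + 2 * s * ⟪g, v t⟫ + ‖g‖ ^ 2 := by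
      have h := norm_add_sq_real (v t) ((1 / s) • g)
      rw [real_inner_smul_right, norm_smul, mul_pow, Real.norm_eq_abs, sq_abs,
        real_inner_comm] at h
      change s ^ 2 * ‖v t + (1 / s) • g‖ ^ 2 = _
      rw [h]
      field_simp
    have hPL : 2 * s ^ 2 * (f (x t) - f xstar) ≤ ‖g‖ ^ 2 := by
      have h₁ := neg_norm_sq_le_two_mul_inner_add (s ^ 2) g (xstar - x t)
      have h₂ := hsc (x t) xstar
      rw [← hg] at h₂
      nlinarith [hμ]
    have hscaled : 2 * s * (s * (f (x t) - f xstar) - s / 2 * ‖w t‖ ^ 2 + ⟪g, v t⟫) ≤ 0 := by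
      nlinarith [mul_nonneg hμ.le (sq_nonneg ‖v t‖)]
    exact nonpos_of_mul_nonpos_right hscaled (by positivity)
  have hanti : AntitoneOn L (Set.Ici 0) := by
    refine antitoneOn_of_hasDerivWithinAt_nonpos (convex_Ici 0)
      (fun t ht => (hL t ht).continuousAt.continuousWithinAt)
      (fun t ht => (hL t (interior_subset ht)).hasDerivWithinAt)
      (fun t ht => hL_nonpos t (interior_subset ht))
  refine ⟨1, |L 0| + 1, one_pos, by positivity, fun t ht => ?_⟩
  have ht₀ : (0 : ℝ) ≤ t := zero_le_one.trans ht
  have hbound : Real.exp (s * t) * (f (x t) - f xstar) ≤ |L 0| + 1 :=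
    calc Real.exp (s * t) * (f (x t) - f xstar) ≤ L t :=
          mul_le_mul_of_nonneg_left (le_add_of_nonneg_right (by positivity)) (Real.exp_pos _).le
      _ ≤ L 0 := hanti Set.self_mem_Ici ht₀ ht₀
      _ ≤ |L 0| + 1 := (le_abs_self _).trans (le_add_of_nonneg_right zero_le_one)
  rw [neg_mul, Real.exp_neg, ← div_eq_mul_inv, le_div_iff₀ (Real.exp_pos _), mul_comm]
  exact hbound
end

section
/- Let μ > 0, let f : ℝⁿ → ℝ be a twice continuously differentiable μ-strongly convex function with global minimizer x*, write f* = f(x*), and let x : [0,∞) → ℝⁿ be a twice differentiable solution of ẍ(t) + √μ·ẋ(t) + (1/√μ)·∇²f(x(t))·ẋ(t) + ∇f(x(t)) = 0. Then the function E(t) = e^{√μ·t}·[ ( f* − f(x(t)) + ⟨∇f(x(t)), x(t) − x*⟩ ) + √μ·⟨x(t) − x*, ẋ(t)⟩ + (1/2)‖ẋ(t)‖² + ( f(x(t)) − f* ) ] is non-increasing on [0,∞) and satisfies E(t) ≥ e^{√μ·t}·( f(x(t)) − f* ) for all t ≥ 0. -/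
open scoped RealInnerProductSpace

section StronglyMonotone

variable {E : Type*} [NormedAddCommGroup E] [InnerProductSpace ℝ E]

/-- A map satisfying the first-order strong convexity inequality is strongly monotone. -/
theorem strongly_monotone_of_strongly_convex {μ : ℝ} {f : E → ℝ} {g : E → E}
    (hsc : ∀ y z, f z ≥ f y + ⟪g y, z - y⟫ + μ / 2 * ‖z - y‖ ^ 2) (y z : E) :
    μ * ‖z - y‖ ^ 2 ≤ ⟪g z - g y, z - y⟫ := by
  have hyz := hsc y z
  have hzy := hsc z y
  rw [← neg_sub z y, inner_neg_right, norm_neg] at hzy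
  rw [inner_sub_left]
  linarith

/-- Strong monotonicity along a differentiable curve passes to the derivatives. -/
theorem mul_norm_sq_le_inner_of_hasDerivAt {μ : ℝ} {x p : ℝ → E} {v H : E} {t : ℝ}
    (hmono : ∀ s, μ * ‖x s - x t‖ ^ 2 ≤ ⟪p s - p t, x s - x t⟫)
    (hx : HasDerivAt x v t) (hp : HasDerivAt p H t) :
    μ * ‖v‖ ^ 2 ≤ ⟪H, v⟫ := by
  have hx' := hasDerivAt_iff_tendsto_slope.1 hx
  have hp' := hasDerivAt_iff_tendsto_slope.1 hp
  refine le_of_tendsto_of_tendsto ((hx'.norm.pow 2).const_mul μ) (hp'.inner hx') ?_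
  refine Filter.Eventually.of_forall fun s => ?_
  simp only [slope, vsub_eq_sub, norm_smul, mul_pow, Real.norm_eq_abs, sq_abs,
    real_inner_smul_left, real_inner_smul_right]
  nlinarith [mul_le_mul_of_nonneg_left (hmono s) (sq_nonneg (s - t)⁻¹)]

end StronglyMonotone

/-- Lyapunov function for the flow
`ẍ + √μ·ẋ + (1/√μ)·∇²f(x)·ẋ + ∇f(x) = 0`:
`E(t) = e^{√μ·t}[(f* − f(x(t)) + ⟨∇f(x(t)), x(t) − x*⟩) + √μ⟨x(t) − x*, ẋ(t)⟩
        + (1/2)‖ẋ(t)‖² + (f(x(t)) − f*)]`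
is non-increasing on `[0,∞)` and dominates `e^{√μ·t}(f(x(t)) − f*)`. -/
theorem second_order_hessian_flow_lyapunov {n : ℕ}
    (μ : ℝ) (hμ : 0 < μ)
    (f : EuclideanSpace ℝ (Fin n) → ℝ)
    (xstar : EuclideanSpace ℝ (Fin n))
    (hf : ContDiff ℝ 2 f)
    (hmin : ∀ y, f xstar ≤ f y)
    (hsc : ∀ y z : EuclideanSpace ℝ (Fin n),
      f z ≥ f y + ⟪gradient f y, z - y⟫ + μ / 2 * ‖z - y‖ ^ 2)
    (x v a H : ℝ → EuclideanSpace ℝ (Fin n))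
    (hx : ∀ t : ℝ, 0 ≤ t → HasDerivAt x (v t) t)
    (hv : ∀ t : ℝ, 0 ≤ t → HasDerivAt v (a t) t)
    (hH : ∀ t : ℝ, 0 ≤ t → HasDerivAt (fun s => gradient f (x s)) (H t) t)
    (hode : ∀ t : ℝ, 0 ≤ t →
      a t + Real.sqrt μ • v t + (1 / Real.sqrt μ) • H t + gradient f (x t) = 0) :
    AntitoneOn (fun t : ℝ =>
        Real.exp (Real.sqrt μ * t) *
          ((f xstar - f (x t) + ⟪gradient f (x t), x t - xstar⟫)
            + Real.sqrt μ * ⟪x t - xstar, v t⟫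
            + 1 / 2 * ‖v t‖ ^ 2
            + (f (x t) - f xstar))) (Set.Ici (0 : ℝ))
      ∧ ∀ t : ℝ, 0 ≤ t →
        Real.exp (Real.sqrt μ * t) *
          ((f xstar - f (x t) + ⟪gradient f (x t), x t - xstar⟫)
            + Real.sqrt μ * ⟪x t - xstar, v t⟫
            + 1 / 2 * ‖v t‖ ^ 2
            + (f (x t) - f xstar))
        ≥ Real.exp (Real.sqrt μ * t) * (f (x t) - f xstar) := by
  have hr : 0 < √μ := Real.sqrt_pos.2 hμ
  have hrr : √μ ^ 2 = μ := Real.sq_sqrt hμ.le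
  constructor
  · have hderiv : ∀ t : ℝ, 0 ≤ t → HasDerivAt (fun t : ℝ =>
        Real.exp (√μ * t) *
          ((f xstar - f (x t) + ⟪gradient f (x t), x t - xstar⟫)
            + √μ * ⟪x t - xstar, v t⟫
            + 1 / 2 * ‖v t‖ ^ 2
            + (f (x t) - f xstar)))
        (Real.exp (√μ * t) * (√μ / 2 * ‖v t‖ ^ 2 - 1 / √μ * ⟪H t, v t⟫)) t := by
      intro t ht
      have hw : HasDerivAt (fun s => x s - xstar) (v t) t := (hx t ht).sub_const xstar
      have hexp : HasDerivAt (fun s : ℝ => Real.exp (√μ * s)) (Real.exp (√μ * t) * √μ) t := by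
        simpa using ((hasDerivAt_id t).const_mul √μ).exp
      have hbracket := (((hH t ht).inner ℝ hw).add ((hw.inner ℝ (hv t ht)).const_mul √μ)).add
        ((hv t ht).norm_sq.const_mul (1 / 2 : ℝ))
      have ha : a t = -(√μ • v t + (1 / √μ) • H t + gradient f (x t)) := by
        rw [eq_neg_iff_add_eq_zero, ← hode t ht]
        abel
      refine ((hexp.mul hbracket).congr_deriv ?_).congr_of_eventuallyEq
        (Filter.Eventually.of_forall fun s => ?_)
      · simp only [Pi.add_apply, ha, inner_neg_right, inner_add_right, real_inner_smul_right,
          real_inner_self_eq_norm_sq]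
        rw [real_inner_comm (H t) (v t), real_inner_comm (H t) (x t - xstar),
          real_inner_comm (gradient f (x t)) (x t - xstar),
          real_inner_comm (gradient f (x t)) (v t)]
        field_simp
        ring
      · simp only [Pi.mul_apply, Pi.add_apply]
        ring
    refine antitoneOn_of_deriv_nonpos (convex_Ici 0)
      (fun t ht => (hderiv t ht).continuousAt.continuousWithinAt)
      (fun t ht => (hderiv t (interior_subset ht)).differentiableAt.differentiableWithinAt)
      fun t ht => ?_
    have ht0 : 0 ≤ t := interior_subset ht
    rw [(hderiv t ht0).deriv]
    have hHv : μ * ‖v t‖ ^ 2 ≤ ⟪H t, v t⟫ :=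
      mul_norm_sq_le_inner_of_hasDerivAt
        (fun s => strongly_monotone_of_strongly_convex hsc (x t) (x s)) (hx t ht0) (hH t ht0)
    have hdiv : √μ * ‖v t‖ ^ 2 ≤ 1 / √μ * ⟪H t, v t⟫ := by
      rw [one_div_mul_eq_div, le_div_iff₀ hr]
      linear_combination hHv + ‖v t‖ ^ 2 * hrr
    refine mul_nonpos_of_nonneg_of_nonpos (Real.exp_pos _).le ?_
    linarith [mul_nonneg hr.le (sq_nonneg ‖v t‖)]
  · intro t _
    refine mul_le_mul_of_nonneg_left ?_ (Real.exp_pos _).le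
    have hconv := hsc (x t) xstar
    rw [← neg_sub (x t) xstar, inner_neg_right, norm_neg] at hconv
    have hsq := norm_add_sq_real (√μ • (x t - xstar)) (v t)
    rw [norm_smul, mul_pow, Real.norm_eq_abs, sq_abs, hrr, real_inner_smul_left] at hsq
    linarith [sq_nonneg ‖√μ • (x t - xstar) + v t‖]
end

section
/- Let f : ℝⁿ → ℝ be a continuously differentiable convex function with global minimizer x*, and let x : (0,∞) → ℝⁿ be a twice differentiable solution of ẍ(t) + (3/t)·ẋ(t) + ∇f(x(t)) = 0 for all t > 0. Then f(x(t)) − f(x*) = O(1/t²) as t → ∞. -/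
open scoped RealInnerProductSpace

/-- The auxiliary curve `x + (t/2) ẋ - x*` of the NAG flow has velocity `-(t/2) ∇f(x)`. -/
theorem nag_flow_hasDerivAt_aux {E : Type*} [NormedAddCommGroup E] [NormedSpace ℝ E]
    {x v : ℝ → E} {a g p : E} {t : ℝ} (ht : 0 < t)
    (hx : HasDerivAt x (v t) t) (hv : HasDerivAt v a t)
    (hode : a + (3 / t) • v t + g = 0) :
    HasDerivAt (fun s => x s + (s / 2) • v s - p) (-(t / 2) • g) t := by
  have h := (hx.add (((hasDerivAt_id t).div_const 2).smul hv)).sub_const p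
  refine h.congr_deriv ?_
  have ha : a = -((3 / t) • v t) - g := by
    rw [← sub_eq_zero, ← hode]
    abel
  rw [ha]
  simp only [id]
  match_scalars <;> field_simp
  norm_num

/-- Along the NAG flow the energy `t² (f(x) - f*) + 2 ‖x + (t/2) ẋ - x*‖²` has derivative
`2t (f(x) - f* - ⟪∇f(x), x - x*⟫)`. -/
theorem nag_flow_hasDerivAt_energy {E : Type*} [NormedAddCommGroup E] [InnerProductSpace ℝ E]
    [CompleteSpace E] {f : E → ℝ} {x v : ℝ → E} {a p : E} {t : ℝ} (ht : 0 < t)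
    (hf : DifferentiableAt ℝ f (x t))
    (hx : HasDerivAt x (v t) t) (hv : HasDerivAt v a t)
    (hode : a + (3 / t) • v t + gradient f (x t) = 0) :
    HasDerivAt (fun s => s ^ 2 * (f (x s) - f p) + 2 * ‖x s + (s / 2) • v s - p‖ ^ 2)
      (2 * t * (f (x t) - f p - ⟪gradient f (x t), x t - p⟫)) t := by
  have hfx : HasDerivAt (fun s => f (x s)) ⟪gradient f (x t), v t⟫ t := by
    simpa [Function.comp_def] using hf.hasFDerivAt.comp_hasDerivAt t hx
  have h := (((hasDerivAt_id t).pow 2).mul (hfx.sub_const (f p))).add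
    ((nag_flow_hasDerivAt_aux (p := p) ht hx hv hode).norm_sq.const_mul 2)
  refine h.congr_deriv ?_
  have hinner : ⟪x t + (t / 2) • v t - p, -(t / 2) • gradient f (x t)⟫
      = -(t / 2) * (⟪gradient f (x t), x t - p⟫ + t / 2 * ⟪gradient f (x t), v t⟫) := by
    rw [real_inner_smul_right, real_inner_comm, add_sub_right_comm, inner_add_right,
      real_inner_smul_right]
  rw [hinner]
  simp only [id, Pi.pow_apply]
  push_cast
  ring

/-- For a continuously differentiable convex `f` with minimizer `x*`,
any twice differentiable solution (on `(0,∞)`) of the NAG flow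
`ẍ(t) + (3/t)·ẋ(t) + ∇f(x(t)) = 0` satisfies `f(x(t)) − f(x*) = O(1/t²)` as `t → ∞`. -/
theorem nag_flow_convex_rate {n : ℕ}
    (f : EuclideanSpace ℝ (Fin n) → ℝ)
    (xstar : EuclideanSpace ℝ (Fin n))
    (hf : ContDiff ℝ 1 f)
    (hmin : ∀ y, f xstar ≤ f y)
    (hconv : ∀ y z : EuclideanSpace ℝ (Fin n),
      f z ≥ f y + ⟪gradient f y, z - y⟫)
    (x v a : ℝ → EuclideanSpace ℝ (Fin n))
    (hx : ∀ t : ℝ, 0 < t → HasDerivAt x (v t) t)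
    (hv : ∀ t : ℝ, 0 < t → HasDerivAt v (a t) t)
    (hode : ∀ t : ℝ, 0 < t → a t + (3 / t) • v t + gradient f (x t) = 0) :
    ∃ T C : ℝ, 0 < T ∧ 0 < C ∧
      ∀ t : ℝ, T ≤ t → f (x t) - f xstar ≤ C / t ^ 2 := by
  set energy : ℝ → ℝ :=
    fun s => s ^ 2 * (f (x s) - f xstar) + 2 * ‖x s + (s / 2) • v s - xstar‖ ^ 2 with henergy
  have hderiv : ∀ t : ℝ, 0 < t → HasDerivAt energy
      (2 * t * (f (x t) - f xstar - ⟪gradient f (x t), x t - xstar⟫)) t := fun t ht =>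
    nag_flow_hasDerivAt_energy ht (hf.differentiable one_ne_zero _) (hx t ht) (hv t ht) (hode t ht)
  have hanti : AntitoneOn energy (Set.Ioi 0) := by
    refine antitoneOn_of_hasDerivWithinAt_nonpos (convex_Ioi 0)
      (fun t ht => (hderiv t ht).continuousAt.continuousWithinAt)
      (fun t ht => (hderiv t (interior_subset ht)).hasDerivWithinAt) fun t ht => ?_
    have ht : 0 < t := interior_subset ht
    have hc := hconv (x t) xstar
    rw [← neg_sub (x t) xstar, inner_neg_right] at hc
    exact mul_nonpos_of_nonneg_of_nonpos (by positivity) (by linarith)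
  have hnonneg : 0 ≤ energy 1 :=
    add_nonneg (mul_nonneg (by positivity) (sub_nonneg.2 (hmin _))) (by positivity)
  refine ⟨1, energy 1 + 1, one_pos, by linarith, fun t ht => ?_⟩
  have ht0 : 0 < t := one_pos.trans_le ht
  have hle : energy t ≤ energy 1 := hanti (Set.mem_Ioi.2 one_pos) ht0 ht
  have hsq : 0 ≤ 2 * ‖x t + (t / 2) • v t - xstar‖ ^ 2 := by positivity
  rw [le_div_iff₀ (by positivity), mul_comm]
  simp only [henergy] at hle ⊢
  linarith
end

section
/- Let f : ℝⁿ → ℝ be a continuously differentiable convex function with global minimizer x*, write f* = f(x*), and let x : (0,∞) → ℝⁿ be a twice differentiable solution of ẍ(t) + (3/t)·ẋ(t) + ∇f(x(t)) = 0 for all t > 0. Then the function E(t) = 2‖x(t) − x*‖² + 2t·⟨x(t) − x*, ẋ(t)⟩ + (t²/2)·‖ẋ(t)‖² + t²·( f(x(t)) − f* ) is non-increasing on (0,∞), and E(t) ≥ t²·( f(x(t)) − f* ) for all t > 0. -/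
open scoped RealInnerProductSpace

section NagFlow

variable {E : Type*} [NormedAddCommGroup E] [InnerProductSpace ℝ E]

/-- Completing the square in the Lyapunov function. -/
theorem nag_flow_quadratic_nonneg (d w : E) (t : ℝ) :
    0 ≤ 2 * ‖d‖ ^ 2 + 2 * t * ⟪d, w⟫ + t ^ 2 / 2 * ‖w‖ ^ 2 := by
  have h := norm_add_sq_real ((2 : ℝ) • d) (t • w)
  simp only [norm_smul, mul_pow, Real.norm_eq_abs, sq_abs, real_inner_smul_left,
    real_inner_smul_right] at h
  nlinarith [sq_nonneg ‖(2 : ℝ) • d + t • w‖]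

/-- Along a solution of `ẍ + (3/t)ẋ + ∇f(x) = 0`, the Lyapunov function has derivative
`2t(f(x) − f* − ⟨∇f(x), x − x*⟩)`. -/
theorem nag_flow_hasDerivAt_lyapunov [CompleteSpace E] {f : E → ℝ} {xstar : E}
    {x v : ℝ → E} {a : E} {t : ℝ} (ht : t ≠ 0) (hf : DifferentiableAt ℝ f (x t))
    (hx : HasDerivAt x (v t) t) (hv : HasDerivAt v a t)
    (hode : a + (3 / t) • v t + gradient f (x t) = 0) :
    HasDerivAt (fun s : ℝ =>
        2 * ‖x s - xstar‖ ^ 2 + 2 * s * ⟪x s - xstar, v s⟫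
          + s ^ 2 / 2 * ‖v s‖ ^ 2 + s ^ 2 * (f (x s) - f xstar))
      (2 * t * (f (x t) - f xstar - ⟪gradient f (x t), x t - xstar⟫)) t := by
  have hd : HasDerivAt (fun s => x s - xstar) (v t) t := hx.sub_const xstar
  have hfx : HasDerivAt (fun s => f (x s)) ⟪gradient f (x t), v t⟫ t :=
    hf.hasGradientAt.hasFDerivAt.comp_hasDerivAt t hx
  have hsq : HasDerivAt (fun s : ℝ => s ^ 2) (2 * t) t := by
    simpa using hasDerivAt_pow 2 t
  have hlin : HasDerivAt (fun s : ℝ => 2 * s) 2 t := by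
    simpa using (hasDerivAt_id t).const_mul (2 : ℝ)
  have hE := (((hd.norm_sq.const_mul 2).add (hlin.mul (hd.inner ℝ hv))).add
    ((hsq.div_const 2).mul hv.norm_sq)).add (hsq.mul (hfx.sub_const (f xstar)))
  refine hE.congr_deriv ?_
  have ha : a = -((3 / t) • v t) - gradient f (x t) := by
    rw [eq_sub_iff_add_eq, eq_neg_iff_add_eq_zero, ← hode]
    abel
  simp only [ha, inner_sub_right, inner_neg_right, real_inner_smul_right,
    real_inner_self_eq_norm_sq, real_inner_comm (gradient f (x t))]
  field_simp
  ring

end NagFlow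

/-- Lyapunov function for the NAG flow `ẍ + (3/t)ẋ + ∇f(x) = 0`:
`E(t) = 2‖x(t) − x*‖² + 2t⟨x(t) − x*, ẋ(t)⟩ + (t²/2)‖ẋ(t)‖² + t²(f(x(t)) − f*)` is
non-increasing on `(0,∞)` and dominates `t²(f(x(t)) − f*)`. -/
theorem nag_flow_convex_lyapunov {n : ℕ}
    (f : EuclideanSpace ℝ (Fin n) → ℝ)
    (xstar : EuclideanSpace ℝ (Fin n))
    (hf : ContDiff ℝ 1 f)
    (hmin : ∀ y, f xstar ≤ f y)
    (hconv : ∀ y z : EuclideanSpace ℝ (Fin n),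
      f z ≥ f y + ⟪gradient f y, z - y⟫)
    (x v a : ℝ → EuclideanSpace ℝ (Fin n))
    (hx : ∀ t : ℝ, 0 < t → HasDerivAt x (v t) t)
    (hv : ∀ t : ℝ, 0 < t → HasDerivAt v (a t) t)
    (hode : ∀ t : ℝ, 0 < t → a t + (3 / t) • v t + gradient f (x t) = 0) :
    AntitoneOn (fun t : ℝ =>
        2 * ‖x t - xstar‖ ^ 2 + 2 * t * ⟪x t - xstar, v t⟫
          + t ^ 2 / 2 * ‖v t‖ ^ 2 + t ^ 2 * (f (x t) - f xstar))
        (Set.Ioi (0 : ℝ))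
      ∧ ∀ t : ℝ, 0 < t →
        2 * ‖x t - xstar‖ ^ 2 + 2 * t * ⟪x t - xstar, v t⟫
          + t ^ 2 / 2 * ‖v t‖ ^ 2 + t ^ 2 * (f (x t) - f xstar)
        ≥ t ^ 2 * (f (x t) - f xstar) := by
  have hE (t : ℝ) (ht : 0 < t) := nag_flow_hasDerivAt_lyapunov (xstar := xstar) ht.ne'
    (hf.differentiable one_ne_zero (x t)) (hx t ht) (hv t ht) (hode t ht)
  refine ⟨antitoneOn_of_hasDerivWithinAt_nonpos (convex_Ioi 0)
    (fun t ht => (hE t ht).continuousAt.continuousWithinAt)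
    (fun t ht => (hE t (interior_subset ht)).hasDerivWithinAt) fun t ht => ?_, fun t _ => ?_⟩
  · have ht : 0 < t := interior_subset ht
    have h := hconv (x t) xstar
    rw [← neg_sub (x t) xstar, inner_neg_right] at h
    exact mul_nonpos_of_nonneg_of_nonpos (by positivity) (by linarith)
  · exact le_add_of_nonneg_left (nag_flow_quadratic_nonneg (x t - xstar) (v t) t)
end

section
/- Let μ > 0, let r > 3, and let f : ℝⁿ → ℝ be a continuously differentiable μ-strongly convex function with global minimizer x*. Let x : (0,∞) → ℝⁿ be a twice differentiable solution of ẍ(t) + (r/t)·ẋ(t) + ∇f(x(t)) = 0 for all t > 0. Then f(x(t)) − f(x*) = O( t^{−(r/2 + 1/2)} ) as t → ∞. -/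
open scoped RealInnerProductSpace

/-- The dissipation rate of the energy `f (x t) - f* + ‖v + (β / t) • d‖² / 2`, weighted by `t ^ β`
with `β = (r + 1) / 2` and `d = x - x*`, written in terms of `A = ‖v‖²`, `D = ‖d‖²`, `B = ⟪v, d⟫`,
`G = ⟪∇f, d⟫`, `H = ⟪∇f, v⟫` and `W = f (x t) - f*`, is nonpositive. -/
lemma nag_energy_rate_nonpos {μ r t W A B D G H : ℝ} (hr : 3 < r) (ht : 0 < t)
    (hA : 0 ≤ A) (hD : 0 ≤ D) (hG : W + μ / 2 * D ≤ G)
    (hT : (r - 3) * (r / 2 + 1 / 2) ≤ 2 * μ * t ^ 2) :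
    (r / 2 + 1 / 2) / t *
        (W + 1 / 2 * (A + 2 * ((r / 2 + 1 / 2) / t) * B + ((r / 2 + 1 / 2) / t) ^ 2 * D)) +
      (H + (((r / 2 + 1 / 2) / t - r / t) * A - H - (r / 2 + 1 / 2) / t ^ 2 * B +
        (r / 2 + 1 / 2) / t *
          (((r / 2 + 1 / 2) / t - r / t) * B - G - (r / 2 + 1 / 2) / t ^ 2 * D))) ≤ 0 := by
  have key : (r / 2 + 1 / 2) / t *
        (W + 1 / 2 * (A + 2 * ((r / 2 + 1 / 2) / t) * B + ((r / 2 + 1 / 2) / t) ^ 2 * D)) +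
      (H + (((r / 2 + 1 / 2) / t - r / t) * A - H - (r / 2 + 1 / 2) / t ^ 2 * B +
        (r / 2 + 1 / 2) / t *
          (((r / 2 + 1 / 2) / t - r / t) * B - G - (r / 2 + 1 / 2) / t ^ 2 * D))) =
      -((r / 2 + 1 / 2) / t * (G - (W + μ / 2 * D)) + (r - 3) / (4 * t) * A +
        (r / 2 + 1 / 2) / (4 * t ^ 3) * (2 * μ * t ^ 2 - (r - 3) * (r / 2 + 1 / 2)) * D) := by
    field_simp
    ring
  rw [key, neg_nonpos]
  have hr0 : 0 < r - 3 := by linarith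
  have hβ : 0 < r / 2 + 1 / 2 := by linarith
  have hG' := sub_nonneg.2 hG
  have hT' := sub_nonneg.2 hT
  positivity

/-- For `μ > 0`, `r > 3` and a continuously differentiable `μ`-strongly
convex `f` with minimizer `x*`, any twice differentiable solution (on `(0,∞)`) of
`ẍ(t) + (r/t)·ẋ(t) + ∇f(x(t)) = 0` satisfies
`f(x(t)) − f(x*) = O(t^{−(r/2 + 1/2)})` as `t → ∞`. -/
theorem nag_flow_strongly_convex_polynomial_rate {n : ℕ}
    (μ r : ℝ) (hμ : 0 < μ) (hr : 3 < r)
    (f : EuclideanSpace ℝ (Fin n) → ℝ)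
    (xstar : EuclideanSpace ℝ (Fin n))
    (hf : ContDiff ℝ 1 f)
    (hmin : ∀ y, f xstar ≤ f y)
    (hsc : ∀ y z : EuclideanSpace ℝ (Fin n),
      f z ≥ f y + ⟪gradient f y, z - y⟫ + μ / 2 * ‖z - y‖ ^ 2)
    (x v a : ℝ → EuclideanSpace ℝ (Fin n))
    (hx : ∀ t : ℝ, 0 < t → HasDerivAt x (v t) t)
    (hv : ∀ t : ℝ, 0 < t → HasDerivAt v (a t) t)
    (hode : ∀ t : ℝ, 0 < t → a t + (r / t) • v t + gradient f (x t) = 0) :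
    ∃ T C : ℝ, 0 < T ∧ 0 < C ∧
      ∀ t : ℝ, T ≤ t → f (x t) - f xstar ≤ C * t ^ (-(r / 2 + 1 / 2)) := by
  set β : ℝ := r / 2 + 1 / 2 with hβ
  have hβ0 : 0 < β := by rw [hβ]; linarith
  set w : ℝ → EuclideanSpace ℝ (Fin n) := fun t => v t + (β / t) • (x t - xstar) with hw
  set E : ℝ → ℝ := fun t => t ^ β * (f (x t) - f xstar + 1 / 2 * ‖w t‖ ^ 2)
  have hf' : ∀ t : ℝ, 0 < t →
      HasDerivAt (fun s => f (x s)) ⟪gradient f (x t), v t⟫ t := fun t ht => by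
    have hg := (hf.differentiable one_ne_zero (x t)).hasGradientAt.hasFDerivAt
    exact (hg.comp_hasDerivAt t (hx t ht)).congr_deriv (InnerProductSpace.toDual_apply_apply ..)
  have hw' : ∀ t : ℝ, 0 < t →
      HasDerivAt w (a t + ((β / t) • v t + (-(β / t ^ 2)) • (x t - xstar))) t := fun t ht => by
    have hq : HasDerivAt (fun s : ℝ => β / s) (-(β / t ^ 2)) t := by
      have h := (hasDerivAt_inv ht.ne').const_mul β
      simpa only [div_eq_mul_inv, mul_neg] using h
    exact (hv t ht).add (hq.smul ((hx t ht).sub_const xstar))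
  have hE' : ∀ t : ℝ, 0 < t → HasDerivAt E (t ^ β * (β / t * (f (x t) - f xstar +
      1 / 2 * ‖w t‖ ^ 2) + (⟪gradient f (x t), v t⟫ + ⟪w t, a t + ((β / t) • v t +
        (-(β / t ^ 2)) • (x t - xstar))⟫))) t := fun t ht => by
    have hp := Real.hasDerivAt_rpow_const (p := β) (Or.inl ht.ne')
    have h := hp.mul (((hf' t ht).sub_const (f xstar)).add
      ((hw' t ht).norm_sq.const_mul (1 / 2)))
    refine h.congr_deriv ?_
    rw [Real.rpow_sub_one ht.ne']
    simp only [Pi.add_apply]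
    ring
  set T : ℝ := 1 + (r - 3) * β / (2 * μ) with hT
  have hT1 : 1 ≤ T := by
    have : 0 ≤ (r - 3) * β / (2 * μ) :=
      div_nonneg (mul_nonneg (by linarith) hβ0.le) (by positivity)
    linarith
  have hnonpos : ∀ t : ℝ, T ≤ t → β / t * (f (x t) - f xstar + 1 / 2 * ‖w t‖ ^ 2) +
      (⟪gradient f (x t), v t⟫ + ⟪w t, a t + ((β / t) • v t +
        (-(β / t ^ 2)) • (x t - xstar))⟫) ≤ 0 := fun t htT => by
    have ht : 0 < t := by linarith
    have ha : a t = -((r / t) • v t) + -gradient f (x t) := by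
      rw [← neg_add]
      exact eq_neg_of_add_eq_zero_left (by rw [← add_assoc]; exact hode t ht)
    have hbound : (r - 3) * β ≤ 2 * μ * t ^ 2 := by
      have h1 : (r - 3) * β / (2 * μ) ≤ t ^ 2 := by nlinarith
      rwa [div_le_iff₀' (by positivity)] at h1
    have hG : f (x t) - f xstar + μ / 2 * ‖x t - xstar‖ ^ 2 ≤
        ⟪gradient f (x t), x t - xstar⟫ := by
      have h := hsc (x t) xstar
      rw [← neg_sub (x t) xstar, inner_neg_right, norm_neg] at h
      linarith
    have h := nag_energy_rate_nonpos (B := ⟪v t, x t - xstar⟫)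
      (H := ⟪gradient f (x t), v t⟫) hr ht (sq_nonneg ‖v t‖) (sq_nonneg ‖x t - xstar‖) hG hbound
    refine le_of_eq_of_le ?_ h
    have hnorm : ‖w t‖ ^ 2 = ‖v t‖ ^ 2 + 2 * (β / t) * ⟪v t, x t - xstar⟫ +
        (β / t) ^ 2 * ‖x t - xstar‖ ^ 2 := by
      rw [hw, norm_add_sq_real, inner_smul_right, norm_smul, mul_pow, Real.norm_eq_abs, sq_abs]
      ring
    rw [hnorm, ha, ← hβ]
    congr 2
    simp only [hw, inner_add_left, inner_add_right, inner_neg_right,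
      real_inner_smul_left, real_inner_smul_right, real_inner_self_eq_norm_sq]
    rw [real_inner_comm (gradient f (x t)) (v t),
      real_inner_comm (gradient f (x t)) (x t - xstar), real_inner_comm (v t) (x t - xstar)]
    ring
  have hanti : AntitoneOn E (Set.Ici T) := by
    refine antitoneOn_of_hasDerivWithinAt_nonpos (convex_Ici T)
      (fun t ht => (hE' t (by linarith [Set.mem_Ici.1 ht])).continuousAt.continuousWithinAt)
      (fun t ht => (hE' t ?_).hasDerivWithinAt) fun t ht => ?_
    all_goals
      rw [interior_Ici, Set.mem_Ioi] at ht
    · linarith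
    · exact mul_nonpos_of_nonneg_of_nonpos (Real.rpow_nonneg (by linarith) _) (hnonpos t ht.le)
  refine ⟨T, |E T| + 1, by linarith, by positivity, fun t htT => ?_⟩
  have ht : 0 < t := by linarith
  have htβ : 0 < t ^ β := Real.rpow_pos_of_pos ht β
  have hle : E t ≤ E T := hanti Set.self_mem_Ici (Set.mem_Ici.2 htT) htT
  have hWE : t ^ β * (f (x t) - f xstar) ≤ E t :=
    mul_le_mul_of_nonneg_left (le_add_of_nonneg_right (by positivity)) htβ.le
  rw [Real.rpow_neg ht.le, ← div_eq_mul_inv, le_div_iff₀' htβ]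
  linarith [le_abs_self (E T)]
end

section
/- Let μ > 0, let k > 0, set T = 2(k² + μ)/k³, and let f : ℝⁿ → ℝ be a continuously differentiable μ-strongly convex function with global minimizer x*; write f* = f(x*). Let x : (0,T] → ℝⁿ be a twice differentiable solution of ẍ(t) + (4(k² + μ)/(k²·t))·ẋ(t) + ∇f(x(t)) = 0 for all t ∈ (0,T]. Then the function E(t) = ( 2(k² + μ)/(k·t) − k²/2 )·e^{kt}·‖x(t) − x*‖² + k·e^{kt}·⟨x(t) − x*, ẋ(t)⟩ + (1/2)·e^{kt}·‖ẋ(t)‖² + e^{kt}·( f(x(t)) − f* ) is non-increasing on (0,T], and E(t) ≥ e^{kt}·( f(x(t)) − f* ) for all t ∈ (0,T]; consequently f(x(t)) − f* ≤ e^{−k(t − t₀)}·E(t₀) whenever 0 < t₀ ≤ t ≤ T. -/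
open scoped RealInnerProductSpace

section Lyapunov

variable {E : Type*} [NormedAddCommGroup E] [InnerProductSpace ℝ E]

/-- Chain rule for the composition of a differentiable function with a curve,
in terms of the gradient. -/
lemma hasDerivWithinAt_comp_gradient [CompleteSpace E] {f : E → ℝ} {x : ℝ → E} {v : E}
    {s : Set ℝ} {t : ℝ} (hf : DifferentiableAt ℝ f (x t)) (hx : HasDerivWithinAt x v s t) :
    HasDerivWithinAt (fun u => f (x u)) ⟪gradient f (x t), v⟫ s t := by
  have h := hf.hasGradientAt.hasFDerivAt.comp_hasDerivWithinAt t hx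
  simpa [Function.comp_def] using h

/-- The derivative of the Lyapunov function along an arbitrary curve. -/
lemma hasDerivWithinAt_lyapunov [CompleteSpace E] {f : E → ℝ} {x v : ℝ → E} {a p : E}
    {s : Set ℝ} {t k c : ℝ} (hk : k ≠ 0) (ht : t ≠ 0) (hf : DifferentiableAt ℝ f (x t))
    (hx : HasDerivWithinAt x (v t) s t) (hv : HasDerivWithinAt v a s t) :
    HasDerivWithinAt (fun t : ℝ =>
        (2 * c / (k * t) - k ^ 2 / 2) * Real.exp (k * t) * ‖x t - p‖ ^ 2
          + k * Real.exp (k * t) * ⟪x t - p, v t⟫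
          + 1 / 2 * Real.exp (k * t) * ‖v t‖ ^ 2
          + Real.exp (k * t) * (f (x t) - f p))
      (Real.exp (k * t) *
        ((k * (2 * c / (k * t) - k ^ 2 / 2) - 2 * c / (k * t ^ 2)) * ‖x t - p‖ ^ 2
          + (k ^ 2 + 2 * (2 * c / (k * t) - k ^ 2 / 2)) * ⟪x t - p, v t⟫
          + 3 * k / 2 * ‖v t‖ ^ 2 + k * ⟪x t - p, a⟫ + ⟪v t, a⟫
          + k * (f (x t) - f p) + ⟪gradient f (x t), v t⟫)) s t := by
  have hw : HasDerivWithinAt (fun u => x u - p) (v t) s t := hx.sub_const p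
  have hexp : HasDerivWithinAt (fun u : ℝ => Real.exp (k * u)) (Real.exp (k * t) * k) s t := by
    simpa using (((hasDerivAt_id t).const_mul k).exp).hasDerivWithinAt
  have hcoef : HasDerivWithinAt (fun u : ℝ => 2 * c / (k * u) - k ^ 2 / 2)
      (-(2 * c / (k * t ^ 2))) s t := by
    have h := ((hasDerivAt_const t (2 * c)).div ((hasDerivAt_id t).const_mul k)
      (mul_ne_zero hk ht)).sub_const (k ^ 2 / 2)
    refine (h.congr_deriv ?_).hasDerivWithinAt
    simp only [id]
    field_simp
    ring
  have hF := (hasDerivWithinAt_comp_gradient hf hx).sub_const (f p)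
  refine (((((hcoef.mul hexp).mul hw.norm_sq).add ((hexp.const_mul k).mul (hw.inner ℝ hv))).add
    ((hexp.const_mul (1 / 2)).mul hv.norm_sq)).add (hexp.mul hF)).congr_deriv ?_
  rw [real_inner_self_eq_norm_sq]
  simp only [Pi.mul_apply]
  ring

/-- The derivative of the Lyapunov function is nonpositive along the flow: the friction is chosen
so that the cross terms cancel, and strong convexity absorbs the position terms. -/
lemma lyapunov_deriv_nonpos {k μ t F : ℝ} {w v a g : E} (hμ : 0 < μ) (hk : 0 < k) (ht : 0 < t)
    (htT : t ≤ 2 * (k ^ 2 + μ) / k ^ 3)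
    (hode : a + (4 * (k ^ 2 + μ) / (k ^ 2 * t)) • v + g = 0)
    (hF : F ≤ ⟪g, w⟫ - μ / 2 * ‖w‖ ^ 2) :
    (k * (2 * (k ^ 2 + μ) / (k * t) - k ^ 2 / 2) - 2 * (k ^ 2 + μ) / (k * t ^ 2)) * ‖w‖ ^ 2
      + (k ^ 2 + 2 * (2 * (k ^ 2 + μ) / (k * t) - k ^ 2 / 2)) * ⟪w, v⟫
      + 3 * k / 2 * ‖v‖ ^ 2 + k * ⟪w, a⟫ + ⟪v, a⟫ + k * F + ⟪g, v⟫ ≤ 0 := by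
  have ha : a = -((4 * (k ^ 2 + μ) / (k ^ 2 * t)) • v) - g := by
    rw [add_assoc] at hode
    rw [eq_neg_of_add_eq_zero_left hode, neg_add']
  have hwa : ⟪w, a⟫ = -(4 * (k ^ 2 + μ) / (k ^ 2 * t) * ⟪w, v⟫) - ⟪g, w⟫ := by
    rw [ha, inner_sub_right, inner_neg_right, inner_smul_right, real_inner_comm w g]
  have hva : ⟪v, a⟫ = -(4 * (k ^ 2 + μ) / (k ^ 2 * t) * ‖v‖ ^ 2) - ⟪g, v⟫ := by
    rw [ha, inner_sub_right, inner_neg_right, inner_smul_right, real_inner_self_eq_norm_sq,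
      real_inner_comm v g]
  have hfric : 2 * k ≤ 4 * (k ^ 2 + μ) / (k ^ 2 * t) := by
    rw [le_div_iff₀ (by positivity)] at htT ⊢
    nlinarith
  have hv : (3 * k / 2 - 4 * (k ^ 2 + μ) / (k ^ 2 * t)) * ‖v‖ ^ 2 ≤ 0 :=
    mul_nonpos_of_nonpos_of_nonneg (by linarith) (by positivity)
  have hw : 0 ≤ k * (k ^ 2 + μ) / 2 * (1 - 2 / (k * t)) ^ 2 * ‖w‖ ^ 2 := by positivity
  have hkF := mul_le_mul_of_nonneg_left hF hk.le
  have hcross : k ^ 2 + 2 * (2 * (k ^ 2 + μ) / (k * t) - k ^ 2 / 2)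
      = k * (4 * (k ^ 2 + μ) / (k ^ 2 * t)) := by
    field_simp
    ring
  have hpos : k * (2 * (k ^ 2 + μ) / (k * t) - k ^ 2 / 2) - 2 * (k ^ 2 + μ) / (k * t ^ 2)
      = k * μ / 2 - k * (k ^ 2 + μ) / 2 * (1 - 2 / (k * t)) ^ 2 := by
    field_simp
    ring
  rw [hwa, hva, hcross, hpos]
  linarith

/-- The quadratic part of the Lyapunov function is nonnegative. -/
lemma lyapunov_quadratic_nonneg {k μ t : ℝ} (w v : E) (hk : 0 < k) (ht : 0 < t)
    (htT : t ≤ 2 * (k ^ 2 + μ) / k ^ 3) :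
    0 ≤ (2 * (k ^ 2 + μ) / (k * t) - k ^ 2 / 2) * ‖w‖ ^ 2 + k * ⟪w, v⟫ + 1 / 2 * ‖v‖ ^ 2 := by
  have hcoef : k ^ 2 ≤ 2 * (k ^ 2 + μ) / (k * t) := by
    rw [le_div_iff₀ (by positivity)] at htT ⊢
    linarith
  have hsq : ‖k • w + v‖ ^ 2 = k ^ 2 * ‖w‖ ^ 2 + 2 * (k * ⟪w, v⟫) + ‖v‖ ^ 2 := by
    rw [norm_add_sq_real, inner_smul_left, norm_smul, mul_pow, Real.norm_eq_abs, sq_abs]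
    rfl
  have := sq_nonneg ‖k • w + v‖
  have := mul_le_mul_of_nonneg_right hcoef (sq_nonneg ‖w‖)
  linarith

end Lyapunov

/-- For `μ, k > 0` and `T = 2(k² + μ)/k³`, with `f` continuously
differentiable and `μ`-strongly convex with minimizer `x*`, for a twice differentiable
solution of `ẍ(t) + (4(k² + μ)/(k²t))·ẋ(t) + ∇f(x(t)) = 0` on `(0,T]`, the function
`E(t) = (2(k² + μ)/(kt) − k²/2)e^{kt}‖x(t) − x*‖² + k e^{kt}⟨x(t) − x*, ẋ(t)⟩
        + (1/2)e^{kt}‖ẋ(t)‖² + e^{kt}(f(x(t)) − f*)`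
is non-increasing on `(0,T]`, dominates `e^{kt}(f(x(t)) − f*)` there, and
consequently `f(x(t)) − f* ≤ e^{−k(t − t₀)}·E(t₀)` for `0 < t₀ ≤ t ≤ T`. -/
theorem nag_flow_restricted_linear_rate_lyapunov {n : ℕ}
    (μ k T : ℝ) (hμ : 0 < μ) (hk : 0 < k)
    (hT : T = 2 * (k ^ 2 + μ) / k ^ 3)
    (f : EuclideanSpace ℝ (Fin n) → ℝ)
    (xstar : EuclideanSpace ℝ (Fin n))
    (hf : ContDiff ℝ 1 f)
    (hmin : ∀ y, f xstar ≤ f y)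
    (hsc : ∀ y z : EuclideanSpace ℝ (Fin n),
      f z ≥ f y + ⟪gradient f y, z - y⟫ + μ / 2 * ‖z - y‖ ^ 2)
    (x v a : ℝ → EuclideanSpace ℝ (Fin n))
    (hx : ∀ t ∈ Set.Ioc (0 : ℝ) T, HasDerivWithinAt x (v t) (Set.Ioc (0 : ℝ) T) t)
    (hv : ∀ t ∈ Set.Ioc (0 : ℝ) T, HasDerivWithinAt v (a t) (Set.Ioc (0 : ℝ) T) t)
    (hode : ∀ t ∈ Set.Ioc (0 : ℝ) T,
      a t + (4 * (k ^ 2 + μ) / (k ^ 2 * t)) • v t + gradient f (x t) = 0) :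
    AntitoneOn (fun t : ℝ =>
        (2 * (k ^ 2 + μ) / (k * t) - k ^ 2 / 2) * Real.exp (k * t) * ‖x t - xstar‖ ^ 2
          + k * Real.exp (k * t) * ⟪x t - xstar, v t⟫
          + 1 / 2 * Real.exp (k * t) * ‖v t‖ ^ 2
          + Real.exp (k * t) * (f (x t) - f xstar)) (Set.Ioc (0 : ℝ) T)
      ∧ (∀ t ∈ Set.Ioc (0 : ℝ) T,
        (2 * (k ^ 2 + μ) / (k * t) - k ^ 2 / 2) * Real.exp (k * t) * ‖x t - xstar‖ ^ 2
          + k * Real.exp (k * t) * ⟪x t - xstar, v t⟫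
          + 1 / 2 * Real.exp (k * t) * ‖v t‖ ^ 2
          + Real.exp (k * t) * (f (x t) - f xstar)
        ≥ Real.exp (k * t) * (f (x t) - f xstar))
      ∧ ∀ t₀ t : ℝ, 0 < t₀ → t₀ ≤ t → t ≤ T →
        f (x t) - f xstar ≤ Real.exp (-k * (t - t₀)) *
          ((2 * (k ^ 2 + μ) / (k * t₀) - k ^ 2 / 2) * Real.exp (k * t₀) * ‖x t₀ - xstar‖ ^ 2
            + k * Real.exp (k * t₀) * ⟪x t₀ - xstar, v t₀⟫
            + 1 / 2 * Real.exp (k * t₀) * ‖v t₀‖ ^ 2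
            + Real.exp (k * t₀) * (f (x t₀) - f xstar)) := by
  subst hT
  have hbound : ∀ t ∈ Set.Ioc (0 : ℝ) (2 * (k ^ 2 + μ) / k ^ 3),
      (2 * (k ^ 2 + μ) / (k * t) - k ^ 2 / 2) * Real.exp (k * t) * ‖x t - xstar‖ ^ 2
          + k * Real.exp (k * t) * ⟪x t - xstar, v t⟫
          + 1 / 2 * Real.exp (k * t) * ‖v t‖ ^ 2
          + Real.exp (k * t) * (f (x t) - f xstar)
        ≥ Real.exp (k * t) * (f (x t) - f xstar) := by
    intro t ht
    have h := mul_nonneg (Real.exp_pos (k * t)).le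
      (lyapunov_quadratic_nonneg (x t - xstar) (v t) hk ht.1 ht.2)
    linarith
  have hderiv := fun t (ht : t ∈ Set.Ioc (0 : ℝ) (2 * (k ^ 2 + μ) / k ^ 3)) =>
    hasDerivWithinAt_lyapunov (c := k ^ 2 + μ) (p := xstar) hk.ne' ht.1.ne'
      (hf.differentiable one_ne_zero (x t)) (hx t ht) (hv t ht)
  have hanti := antitoneOn_of_hasDerivWithinAt_nonpos (convex_Ioc _ _)
    (fun t ht => (hderiv t ht).continuousWithinAt)
    (fun t ht => (hderiv t (interior_subset ht)).mono interior_subset) (by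
      intro t ht
      have ht' := interior_subset ht
      refine mul_nonpos_of_nonneg_of_nonpos (Real.exp_pos _).le
        (lyapunov_deriv_nonpos hμ hk ht'.1 ht'.2 (hode t ht') ?_)
      have h := hsc (x t) xstar
      rw [← neg_sub (x t) xstar, inner_neg_right, norm_neg] at h
      linarith)
  refine ⟨hanti, hbound, fun t₀ t ht₀ htt htT => ?_⟩
  have hle := (hbound t ⟨ht₀.trans_le htt, htT⟩).le.trans
    (hanti ⟨ht₀, htt.trans htT⟩ ⟨ht₀.trans_le htt, htT⟩ htt)
  have hE₀ := (mul_nonneg (Real.exp_pos (k * t₀)).le (sub_nonneg.2 (hmin (x t₀)))).trans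
    (hbound t₀ ⟨ht₀, htt.trans htT⟩)
  calc f (x t) - f xstar
      = Real.exp (-(k * t)) * (Real.exp (k * t) * (f (x t) - f xstar)) := by
        rw [← mul_assoc, ← Real.exp_add, neg_add_cancel, Real.exp_zero, one_mul]
    _ ≤ _ := mul_le_mul_of_nonneg_left hle (Real.exp_pos _).le
    _ ≤ _ := mul_le_mul_of_nonneg_right
        (Real.exp_le_exp.2 (by linarith [mul_pos hk ht₀])) hE₀
end

section
/- Let μ > 0, let l > 0, set T = 2(l² + 1)/(l³·√μ), and let f : ℝⁿ → ℝ be a continuously differentiable μ-strongly convex function with global minimizer x*; write f* = f(x*). Let x : (0,T] → ℝⁿ be a twice differentiable solution of ẍ(t) + (4(l² + 1)/(l²·t))·ẋ(t) + ∇f(x(t)) = 0 for all t ∈ (0,T]. Then the function E(t) = l²·μ·(T/t − 1)·e^{l√μ·t}·‖x(t) − x*‖² + (1/2)·e^{l√μ·t}·‖ẋ(t) + l√μ·(x(t) − x*)‖² + e^{l√μ·t}·( f(x(t)) − f* ) is non-increasing on (0,T]. -/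
open scoped RealInnerProductSpace

/-- The sign of the energy dissipation: `W = ‖w‖²` and `V = ‖v‖²` stand for the squared norms of
displacement and velocity, `P = ⟪w, v⟫`, `G = ⟪∇f, w⟫`, `H = ⟪∇f, v⟫` and `F` for the function
value gap. -/
lemma energy_dissipation_nonpos {s T t μ W V P G H F : ℝ} (hs : 0 < s) (ht : 0 < t) (htT : t ≤ T)
    (hμ : μ = s ^ 2 * (s * T / 2 - 1)) (hW : 0 ≤ W) (hV : 0 ≤ V) (hF : F ≤ G - μ / 2 * W) :
    s * (s ^ 2 * (T / t - 1) * W + 1 / 2 * (V + 2 * s * P + s ^ 2 * W) + F)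
      - s ^ 2 * (T / t ^ 2) * W + 2 * s ^ 2 * (T / t - 1) * P
      + ((s - 2 * s * T / t) * V + s * (s - 2 * s * T / t) * P - H - s * G) + H ≤ 0 := by
  have hT : 0 < T := ht.trans_le htT
  have hsF : s * F ≤ s * (G - μ / 2 * W) := mul_le_mul_of_nonneg_left hF hs.le
  have hTt : 1 ≤ T / t := (one_le_div ht).2 htT
  have hVcoeff : s * (3 / 2 - 2 * (T / t)) * V ≤ 0 :=
    mul_nonpos_of_nonpos_of_nonneg
      (mul_nonpos_of_nonneg_of_nonpos hs.le (by linarith)) hV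
  have hWcoeff : 0 ≤ s ^ 2 * T / t ^ 2 * (s * t / 2 - 1) ^ 2 * W := by positivity
  have key : s * (s ^ 2 * (T / t - 1) * W + 1 / 2 * (V + 2 * s * P + s ^ 2 * W)
        + (G - μ / 2 * W))
      - s ^ 2 * (T / t ^ 2) * W + 2 * s ^ 2 * (T / t - 1) * P
      + ((s - 2 * s * T / t) * V + s * (s - 2 * s * T / t) * P - H - s * G) + H
      = s * (3 / 2 - 2 * (T / t)) * V - s ^ 2 * T / t ^ 2 * (s * t / 2 - 1) ^ 2 * W := by
    rw [hμ]
    field_simp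
    ring
  linarith

/-- For `μ, l > 0` and `T = 2(l² + 1)/(l³√μ)`, with `f` continuously
differentiable and `μ`-strongly convex with minimizer `x*`, for a twice differentiable
solution of `ẍ(t) + (4(l² + 1)/(l²t))·ẋ(t) + ∇f(x(t)) = 0` on `(0,T]`, the function
`E(t) = l²μ(T/t − 1)e^{l√μt}‖x(t) − x*‖² + (1/2)e^{l√μt}‖ẋ(t) + l√μ(x(t) − x*)‖²
        + e^{l√μt}(f(x(t)) − f*)`
is non-increasing on `(0,T]`. -/
theorem nag_flow_restart_lyapunov {n : ℕ}
    (μ l T : ℝ) (hμ : 0 < μ) (hl : 0 < l)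
    (hT : T = 2 * (l ^ 2 + 1) / (l ^ 3 * Real.sqrt μ))
    (f : EuclideanSpace ℝ (Fin n) → ℝ)
    (xstar : EuclideanSpace ℝ (Fin n))
    (hf : ContDiff ℝ 1 f)
    (hmin : ∀ y, f xstar ≤ f y)
    (hsc : ∀ y z : EuclideanSpace ℝ (Fin n),
      f z ≥ f y + ⟪gradient f y, z - y⟫ + μ / 2 * ‖z - y‖ ^ 2)
    (x v a : ℝ → EuclideanSpace ℝ (Fin n))
    (hx : ∀ t ∈ Set.Ioc (0 : ℝ) T, HasDerivWithinAt x (v t) (Set.Ioc (0 : ℝ) T) t)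
    (hv : ∀ t ∈ Set.Ioc (0 : ℝ) T, HasDerivWithinAt v (a t) (Set.Ioc (0 : ℝ) T) t)
    (hode : ∀ t ∈ Set.Ioc (0 : ℝ) T,
      a t + (4 * (l ^ 2 + 1) / (l ^ 2 * t)) • v t + gradient f (x t) = 0) :
    AntitoneOn (fun t : ℝ =>
        l ^ 2 * μ * (T / t - 1) * Real.exp (l * Real.sqrt μ * t) * ‖x t - xstar‖ ^ 2
          + 1 / 2 * Real.exp (l * Real.sqrt μ * t) *
              ‖v t + (l * Real.sqrt μ) • (x t - xstar)‖ ^ 2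
          + Real.exp (l * Real.sqrt μ * t) * (f (x t) - f xstar))
      (Set.Ioc (0 : ℝ) T) := by
  have hsq : 0 < Real.sqrt μ := Real.sqrt_pos.2 hμ
  have hμsq : Real.sqrt μ ^ 2 = μ := Real.sq_sqrt hμ.le
  set s : ℝ := l * Real.sqrt μ with hs_def
  have hs : 0 < s := mul_pos hl hsq
  have hs2 : l ^ 2 * μ = s ^ 2 := by rw [hs_def, mul_pow, hμsq]
  have hfric : 4 * (l ^ 2 + 1) / l ^ 2 = 2 * s * T := by
    rw [hT, hs_def]
    field_simp
    ring
  have hμs : μ = s ^ 2 * (s * T / 2 - 1) := by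
    have h : s * T / 2 - 1 = 1 / l ^ 2 := by
      rw [hT, hs_def]
      field_simp
      ring
    rw [h, ← hs2]
    field_simp
  rw [hs2]
  have hderiv : ∀ t ∈ Set.Ioc (0 : ℝ) T, HasDerivWithinAt (fun t : ℝ =>
        s ^ 2 * (T / t - 1) * Real.exp (s * t) * ‖x t - xstar‖ ^ 2
          + 1 / 2 * Real.exp (s * t) * ‖v t + s • (x t - xstar)‖ ^ 2
          + Real.exp (s * t) * (f (x t) - f xstar))
      (Real.exp (s * t) *
        (s * (s ^ 2 * (T / t - 1) * ‖x t - xstar‖ ^ 2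
            + 1 / 2 * ‖v t + s • (x t - xstar)‖ ^ 2 + (f (x t) - f xstar))
          - s ^ 2 * (T / t ^ 2) * ‖x t - xstar‖ ^ 2
          + 2 * s ^ 2 * (T / t - 1) * ⟪x t - xstar, v t⟫
          + ⟪v t + s • (x t - xstar), a t + s • v t⟫ + ⟪gradient f (x t), v t⟫))
      (Set.Ioc (0 : ℝ) T) t := by
    intro t ht
    have ht0 : t ≠ 0 := ht.1.ne'
    have hw := (hx t ht).sub_const xstar
    have hexp : HasDerivWithinAt (fun t : ℝ => Real.exp (s * t)) (Real.exp (s * t) * s)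
        (Set.Ioc (0 : ℝ) T) t := by
      simpa using (((hasDerivAt_id t).const_mul s).exp).hasDerivWithinAt
    have hcoef : HasDerivWithinAt (fun t : ℝ => s ^ 2 * (T / t - 1)) (s ^ 2 * (-(T / t ^ 2)))
        (Set.Ioc (0 : ℝ) T) t := by
      have h := ((((hasDerivAt_inv ht0).const_mul T).sub_const 1).const_mul (s ^ 2))
      refine (h.congr_deriv ?_).hasDerivWithinAt
      ring
    have hfx : HasDerivWithinAt (fun t : ℝ => f (x t)) ⟪gradient f (x t), v t⟫
        (Set.Ioc (0 : ℝ) T) t := by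
      have hgrad := ((hf.differentiable one_ne_zero) (x t)).hasGradientAt.hasFDerivAt
      exact hgrad.comp_hasDerivWithinAt t (hx t ht)
    refine ((((hcoef.mul hexp).mul hw.norm_sq).add
      ((hexp.const_mul (1 / 2)).mul ((hv t ht).add (hw.const_smul s)).norm_sq)).add
      (hexp.mul (hfx.sub_const (f xstar)))).congr_deriv ?_
    simp only [Pi.mul_apply, Pi.add_apply, Pi.smul_apply]
    ring
  refine antitoneOn_of_hasDerivWithinAt_nonpos (convex_Ioc 0 T)
    (fun t ht => (hderiv t ht).continuousWithinAt)
    (fun t ht => (hderiv t (interior_subset ht)).mono interior_subset) fun t ht => ?_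
  replace ht := interior_subset ht
  refine mul_nonpos_of_nonneg_of_nonpos (Real.exp_pos _).le ?_
  have ha : a t = -((2 * s * T / t) • v t) - gradient f (x t) := by
    rw [← hfric, div_div, ← sub_eq_zero, ← hode t ht]
    abel
  have hF : f (x t) - f xstar
      ≤ ⟪gradient f (x t), x t - xstar⟫ - μ / 2 * ‖x t - xstar‖ ^ 2 := by
    have h := hsc (x t) xstar
    rw [← neg_sub (x t) xstar, inner_neg_right, norm_neg] at h
    linarith
  have hnorm : ‖v t + s • (x t - xstar)‖ ^ 2
      = ‖v t‖ ^ 2 + 2 * s * ⟪x t - xstar, v t⟫ + s ^ 2 * ‖x t - xstar‖ ^ 2 := by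
    rw [norm_add_sq_real, norm_smul, mul_pow, Real.norm_eq_abs, sq_abs, inner_smul_right,
      real_inner_comm]
    ring
  have hinner : ⟪v t + s • (x t - xstar), a t + s • v t⟫
      = (s - 2 * s * T / t) * ‖v t‖ ^ 2 + s * (s - 2 * s * T / t) * ⟪x t - xstar, v t⟫
        - ⟪gradient f (x t), v t⟫ - s * ⟪gradient f (x t), x t - xstar⟫ := by
    rw [ha]
    generalize x t - xstar = w
    simp only [inner_add_left, inner_add_right, inner_sub_right, inner_neg_right,
      inner_smul_right, real_inner_smul_left, real_inner_self_eq_norm_sq,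
      real_inner_comm (gradient f (x t))]
    ring
  rw [hnorm, hinner]
  exact energy_dissipation_nonpos hs ht.1 ht.2 hμs (sq_nonneg _) (sq_nonneg _) hF
end

section
/- Let μ > 0, l > 0, c > 1, set T = 2(l² + 1)/(l³·√μ), and let f : ℝⁿ → ℝ be a continuously differentiable μ-strongly convex function with global minimizer x*; write f* = f(x*). Let x : [T/c, T] → ℝⁿ be a twice differentiable solution of ẍ(t) + (4(l² + 1)/(l²·t))·ẋ(t) + ∇f(x(t)) = 0, and define g(t) = f(x(t)) − f* + (1/2)·‖ẋ(t) + l√μ·(x(t) − x*)‖². Then g(T) ≤ ( 2(c−1)·l² + 1 )·e^{(−1 + 1/c)·2(l² + 1)/l²}·g(T/c). -/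
open scoped RealInnerProductSpace

section NagFlow

variable {E : Type*} [NormedAddCommGroup E] [InnerProductSpace ℝ E]

/-- Pointwise decay inequality for the Lyapunov function of the damped flow
`a + 2mTu • v + p = 0`, where `u = 1/t`, `z = x - x*` and `p` is the gradient. -/
lemma nag_flow_dissipation {m μ T u F : ℝ} {z v a p : E} (hm : 0 < m) (hT : 0 < T)
    (hTu : 1 ≤ T * u) (hmT : m ^ 3 * T = 2 * (m ^ 2 + μ))
    (hode : a + (2 * m * T * u) • v + p = 0)
    (hF : F ≤ ⟪p, z⟫ - μ / 2 * ‖z‖ ^ 2) :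
    m * (F + 1 / 2 * ‖v + m • z‖ ^ 2 + m ^ 2 * (T * u - 1) * ‖z‖ ^ 2)
      + (⟪p, v⟫ + 1 / 2 * (2 * ⟪v + m • z, a + m • v⟫)
        + (m ^ 2 * (-(T * u ^ 2)) * ‖z‖ ^ 2 + m ^ 2 * (T * u - 1) * (2 * ⟪z, v⟫))) ≤ 0 := by
  have ha : a = -((2 * m * T * u) • v) - p := by
    rw [eq_sub_iff_add_eq, eq_neg_iff_add_eq_zero, ← hode]; abel
  have hw : ‖v + m • z‖ ^ 2 = ‖v‖ ^ 2 + 2 * m * ⟪z, v⟫ + m ^ 2 * ‖z‖ ^ 2 := by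
    rw [norm_add_sq_real, norm_smul, real_inner_smul_right, real_inner_comm, mul_pow,
      Real.norm_eq_abs, sq_abs]
    ring
  have hi : ⟪v + m • z, a + m • v⟫ = (m - 2 * m * T * u) * ‖v‖ ^ 2 - ⟪p, v⟫
      + m * (m - 2 * m * T * u) * ⟪z, v⟫ - m * ⟪p, z⟫ := by
    simp only [ha, inner_add_left, inner_add_right, inner_sub_right, inner_neg_right,
      real_inner_smul_left, real_inner_smul_right, real_inner_self_eq_norm_sq,
      real_inner_comm p v, real_inner_comm p z]
    ring
  rw [hw, hi]
  have hFm := mul_le_mul_of_nonneg_left hF hm.le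
  have hv : 0 ≤ m * (T * u - 1) * ‖v‖ ^ 2 :=
    mul_nonneg (mul_nonneg hm.le (by linarith)) (sq_nonneg _)
  have hv' : 0 ≤ m * ‖v‖ ^ 2 := by positivity
  have hz : 0 ≤ m ^ 2 * T * (u - m / 2) ^ 2 * ‖z‖ ^ 2 := by positivity
  have hmz : m * ‖z‖ ^ 2 * (m ^ 3 * T) = m * ‖z‖ ^ 2 * (2 * (m ^ 2 + μ)) := by rw [hmT]
  nlinarith

variable [CompleteSpace E]

/-- Strong convexity gives quadratic growth away from a minimizer. -/
lemma quadratic_growth_of_strong_convexity {μ : ℝ} {f : E → ℝ} {xstar : E}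
    (hmin : ∀ y, f xstar ≤ f y)
    (hsc : ∀ y z : E, f z ≥ f y + ⟪gradient f y, z - y⟫ + μ / 2 * ‖z - y‖ ^ 2) (y : E) :
    μ / 2 * ‖y - xstar‖ ^ 2 ≤ f y - f xstar := by
  have hlm : IsLocalMin f xstar := Filter.Eventually.of_forall hmin
  have hg : gradient f xstar = 0 := by simp [gradient, hlm.fderiv_eq_zero]
  have := hsc xstar y
  rw [hg, inner_zero_left] at this
  linarith

/-- The Lyapunov function of the damped flow with coefficient `2mT/t` is nonincreasing. -/
lemma nag_flow_lyapunov_antitoneOn {m μ T t₀ : ℝ} (hm : 0 < m) (hT : 0 < T) (ht₀ : 0 < t₀)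
    (hmT : m ^ 3 * T = 2 * (m ^ 2 + μ)) {f : E → ℝ} {xstar : E} (hf : Differentiable ℝ f)
    (hsc : ∀ y z : E, f z ≥ f y + ⟪gradient f y, z - y⟫ + μ / 2 * ‖z - y‖ ^ 2)
    {x v a : ℝ → E}
    (hx : ∀ t ∈ Set.Icc t₀ T, HasDerivWithinAt x (v t) (Set.Icc t₀ T) t)
    (hv : ∀ t ∈ Set.Icc t₀ T, HasDerivWithinAt v (a t) (Set.Icc t₀ T) t)
    (hode : ∀ t ∈ Set.Icc t₀ T, a t + (2 * m * T * t⁻¹) • v t + gradient f (x t) = 0) :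
    AntitoneOn (fun t => Real.exp (m * t) * (f (x t) - f xstar
      + 1 / 2 * ‖v t + m • (x t - xstar)‖ ^ 2
      + m ^ 2 * (T * t⁻¹ - 1) * ‖x t - xstar‖ ^ 2)) (Set.Icc t₀ T) := by
  have key : ∀ t ∈ Set.Icc t₀ T, HasDerivWithinAt
      (fun t => Real.exp (m * t) * (f (x t) - f xstar
        + 1 / 2 * ‖v t + m • (x t - xstar)‖ ^ 2
        + m ^ 2 * (T * t⁻¹ - 1) * ‖x t - xstar‖ ^ 2))
      (Real.exp (m * t) * (m * (f (x t) - f xstar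
        + 1 / 2 * ‖v t + m • (x t - xstar)‖ ^ 2
        + m ^ 2 * (T * t⁻¹ - 1) * ‖x t - xstar‖ ^ 2)
        + (⟪gradient f (x t), v t⟫
          + 1 / 2 * (2 * ⟪v t + m • (x t - xstar), a t + m • v t⟫)
          + (m ^ 2 * (-(T * t⁻¹ ^ 2)) * ‖x t - xstar‖ ^ 2
            + m ^ 2 * (T * t⁻¹ - 1) * (2 * ⟪x t - xstar, v t⟫)))))
      (Set.Icc t₀ T) t := by
    intro t ht
    have ht0 : t ≠ 0 := (ht₀.trans_le ht.1).ne'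
    have hz := (hx t ht).sub_const xstar
    have hw := ((hv t ht).add (hz.const_smul m)).norm_sq.const_mul (1 / 2 : ℝ)
    have hfx : HasDerivWithinAt (fun t => f (x t) - f xstar) ⟪gradient f (x t), v t⟫
        (Set.Icc t₀ T) t := by
      have := (hf (x t)).hasGradientAt.hasFDerivAt.comp_hasDerivWithinAt t (hx t ht)
      simpa using this.sub_const (f xstar)
    have hc : HasDerivWithinAt (fun t : ℝ => m ^ 2 * (T * t⁻¹ - 1)) (m ^ 2 * (-(T * t⁻¹ ^ 2)))
        (Set.Icc t₀ T) t := by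
      have := ((((hasDerivAt_inv ht0).const_mul T).sub_const 1).const_mul (m ^ 2))
      exact (this.congr_deriv (by ring)).hasDerivWithinAt
    have he : HasDerivWithinAt (fun t : ℝ => Real.exp (m * t)) (Real.exp (m * t) * m)
        (Set.Icc t₀ T) t := by
      simpa using (((hasDerivAt_id t).const_mul m).exp).hasDerivWithinAt
    refine (he.mul ((hfx.add hw).add (hc.mul hz.norm_sq))).congr_deriv ?_
    simp only [Pi.add_apply, Pi.mul_apply, Pi.smul_apply]
    ring
  refine antitoneOn_of_hasDerivWithinAt_nonpos (convex_Icc _ _)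
    (fun t ht => (key t ht).continuousWithinAt)
    (fun t ht => (key t (interior_subset ht)).mono interior_subset) fun t ht => ?_
  replace ht := interior_subset ht
  have ht0 : 0 < t := ht₀.trans_le ht.1
  refine mul_nonpos_of_nonneg_of_nonpos (Real.exp_pos _).le
    (nag_flow_dissipation hm hT ?_ hmT (hode t ht) ?_)
  · rw [← div_eq_mul_inv, one_le_div ht0]
    exact ht.2
  · have := hsc (x t) xstar
    rw [← neg_sub (x t) xstar, inner_neg_right, norm_neg] at this
    linarith

end NagFlow

/-- One round of the restart scheme: for `μ > 0`, `l > 0`, `c > 1`,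
`T = 2(l² + 1)/(l³√μ)`, a `μ`-strongly convex `f` with minimizer `x*`, and a twice
differentiable solution on `[T/c, T]` of `ẍ(t) + (4(l² + 1)/(l²t))·ẋ(t) + ∇f(x(t)) = 0`,
setting `g(t) = f(x(t)) − f* + (1/2)‖ẋ(t) + l√μ(x(t) − x*)‖²`, one has
`g(T) ≤ (2(c−1)l² + 1)·e^{(−1 + 1/c)·2(l² + 1)/l²}·g(T/c)`. -/
theorem nag_flow_restart_one_round {n : ℕ}
    (μ l c T : ℝ) (hμ : 0 < μ) (hl : 0 < l) (hc : 1 < c)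
    (hT : T = 2 * (l ^ 2 + 1) / (l ^ 3 * Real.sqrt μ))
    (f : EuclideanSpace ℝ (Fin n) → ℝ)
    (xstar : EuclideanSpace ℝ (Fin n))
    (hf : ContDiff ℝ 1 f)
    (hmin : ∀ y, f xstar ≤ f y)
    (hsc : ∀ y z : EuclideanSpace ℝ (Fin n),
      f z ≥ f y + ⟪gradient f y, z - y⟫ + μ / 2 * ‖z - y‖ ^ 2)
    (x v a : ℝ → EuclideanSpace ℝ (Fin n))
    (hx : ∀ t ∈ Set.Icc (T / c) T, HasDerivWithinAt x (v t) (Set.Icc (T / c) T) t)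
    (hv : ∀ t ∈ Set.Icc (T / c) T, HasDerivWithinAt v (a t) (Set.Icc (T / c) T) t)
    (hode : ∀ t ∈ Set.Icc (T / c) T,
      a t + (4 * (l ^ 2 + 1) / (l ^ 2 * t)) • v t + gradient f (x t) = 0) :
    f (x T) - f xstar
        + 1 / 2 * ‖v T + (l * Real.sqrt μ) • (x T - xstar)‖ ^ 2
      ≤ (2 * (c - 1) * l ^ 2 + 1) * Real.exp ((-1 + 1 / c) * (2 * (l ^ 2 + 1) / l ^ 2)) *
          (f (x (T / c)) - f xstar
            + 1 / 2 * ‖v (T / c) + (l * Real.sqrt μ) • (x (T / c) - xstar)‖ ^ 2) := by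
  have hsμ : 0 < Real.sqrt μ := Real.sqrt_pos.2 hμ
  have hsq : Real.sqrt μ ^ 2 = μ := Real.sq_sqrt hμ.le
  have hc0 : 0 < c := by linarith
  set m := l * Real.sqrt μ with hm_def
  have hm : 0 < m := by positivity
  have hT0 : 0 < T := by rw [hT]; positivity
  have hm2 : m ^ 2 = l ^ 2 * μ := by rw [hm_def, mul_pow, hsq]
  have hmT : m * T = 2 * (l ^ 2 + 1) / l ^ 2 := by
    rw [hT, hm_def]; field_simp
  have hm3T : m ^ 3 * T = 2 * (m ^ 2 + μ) := by
    calc m ^ 3 * T = m ^ 2 * (m * T) := by ring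
      _ = 2 * (m ^ 2 + μ) := by rw [hmT, hm2]; field_simp
  have hle : T / c ≤ T := div_le_self hT0.le hc.le
  have hanti := nag_flow_lyapunov_antitoneOn (xstar := xstar) hm hT0 (div_pos hT0 hc0) hm3T
    (hf.differentiable one_ne_zero) hsc hx hv (fun t ht => by
      have ht0 : t ≠ 0 := ((div_pos hT0 hc0).trans_le ht.1).ne'
      rw [← hode t ht]
      congr 3
      rw [mul_assoc 2 m T, hmT]
      field_simp
      ring)
  have hV := hanti (Set.left_mem_Icc.2 hle) (Set.right_mem_Icc.2 hle) hle
  simp only [mul_inv_cancel₀ hT0.ne', sub_self, mul_zero, zero_mul, add_zero] at hV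
  rw [show T * (T / c)⁻¹ = c by field_simp] at hV
  have hgrowth := quadratic_growth_of_strong_convexity hmin hsc (x (T / c))
  have hbound : m ^ 2 * (c - 1) * ‖x (T / c) - xstar‖ ^ 2
      ≤ 2 * (c - 1) * l ^ 2 * (f (x (T / c)) - f xstar) := by
    have hk : 0 ≤ 2 * (c - 1) * l ^ 2 := by
      have : 0 ≤ c - 1 := by linarith
      positivity
    calc _ = 2 * (c - 1) * l ^ 2 * (μ / 2 * ‖x (T / c) - xstar‖ ^ 2) := by rw [hm2]; ring
      _ ≤ _ := mul_le_mul_of_nonneg_left hgrowth hk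
  have hexp : Real.exp ((-1 + 1 / c) * (2 * (l ^ 2 + 1) / l ^ 2))
      = Real.exp (m * (T / c)) / Real.exp (m * T) := by
    rw [← hmT, ← Real.exp_sub]
    congr 1
    ring
  have hsum : f (x (T / c)) - f xstar + 1 / 2 * ‖v (T / c) + m • (x (T / c) - xstar)‖ ^ 2
        + m ^ 2 * (c - 1) * ‖x (T / c) - xstar‖ ^ 2
      ≤ (2 * (c - 1) * l ^ 2 + 1) * (f (x (T / c)) - f xstar
        + 1 / 2 * ‖v (T / c) + m • (x (T / c) - xstar)‖ ^ 2) := by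
    have : 0 ≤ (c - 1) * l ^ 2 * ‖v (T / c) + m • (x (T / c) - xstar)‖ ^ 2 := by
      have : 0 ≤ c - 1 := by linarith
      positivity
    linarith
  rw [hexp]
  refine le_of_mul_le_mul_left (hV.trans ((mul_le_mul_of_nonneg_left hsum
    (Real.exp_pos _).le).trans_eq ?_)) (Real.exp_pos (m * T))
  field_simp
end

section
/- Let μ > 0, l > 0, c > 1, set T = 2(l² + 1)/(l³·√μ) and ρ = ( 2(c−1)·l² + 1 )·e^{(−1 + 1/c)·2(l² + 1)/l²}, and let f : ℝⁿ → ℝ be a continuously differentiable μ-strongly convex function with global minimizer x*; write f* = f(x*). Let (x_i)_{i≥1} be a sequence of twice differentiable trajectories x_i : [T/c, T] → ℝⁿ, each solving ẍ(t) + (4(l² + 1)/(l²·t))·ẋ(t) + ∇f(x(t)) = 0 on [T/c, T], with matching restart data x_{i+1}(T/c) = x_i(T) and ẋ_{i+1}(T/c) = ẋ_i(T) for all i ≥ 1. Define g_0 = f(x_1(T/c)) − f* + (1/2)·‖ẋ_1(T/c) + l√μ·(x_1(T/c) − x*)‖² and, for i ≥ 1, g_i = f(x_i(T)) − f* + (1/2)·‖ẋ_i(T)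 + l√μ·(x_i(T) − x*)‖². Then g_i ≤ ρ^i · g_0 for every i ≥ 1. -/
open scoped RealInnerProductSpace

section DampedFlow

variable {E : Type*} [NormedAddCommGroup E] [InnerProductSpace ℝ E] [CompleteSpace E]

/-- Quadratic growth of a strongly convex function around a global minimizer. -/
lemma quadratic_growth_of_strongly_convex {f : E → ℝ} {μ : ℝ} {xstar : E}
    (hmin : ∀ y, f xstar ≤ f y)
    (hsc : ∀ y z : E, f z ≥ f y + ⟪gradient f y, z - y⟫ + μ / 2 * ‖z - y‖ ^ 2) (y : E) :
    μ / 2 * ‖y - xstar‖ ^ 2 ≤ f y - f xstar := by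
  have hloc : IsLocalMin f xstar := Filter.Eventually.of_forall hmin
  have hgrad : gradient f xstar = 0 := by simp [gradient, hloc.fderiv_eq_zero]
  have h := hsc xstar y
  rw [hgrad, inner_zero_left] at h
  linarith

/-- Energy of the flow `ẍ + p ẋ + ∇f(x) = 0` at position `x`, velocity `v` and friction `p`. -/
noncomputable def dampedEnergy (f : E → ℝ) (xstar : E) (a p : ℝ) (x v : E) : ℝ :=
  f x - f xstar + 1 / 2 * ‖v + a • (x - xstar)‖ ^ 2
    + 1 / 2 * (a * (p - 2 * a)) * ‖x - xstar‖ ^ 2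

/-- The time derivative of `dampedEnergy` along the flow with friction `r / t`. -/
lemma hasDerivAt_dampedEnergy {f : E → ℝ} (hf : Differentiable ℝ f) (xstar : E) (a r : ℝ)
    {x v : ℝ → E} {v' : E} {t : ℝ} (ht : t ≠ 0)
    (hx : HasDerivAt x (v t) t) (hv : HasDerivAt v v' t)
    (hode : v' + (r / t) • v t + gradient f (x t) = 0) :
    HasDerivAt (fun s => dampedEnergy f xstar a (r / s) (x s) (v s))
      (-a * ⟪gradient f (x t), x t - xstar⟫ + (a - r / t) * ‖v t‖ ^ 2
        - a ^ 2 * ⟪v t, x t - xstar⟫ - a * (r / t ^ 2) / 2 * ‖x t - xstar‖ ^ 2) t := by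
  have hfx : HasDerivAt (fun s => f (x s)) ⟪gradient f (x t), v t⟫ t :=
    ((hf (x t)).hasFDerivAt.comp_hasDerivAt t hx).congr_deriv (by simp)
  have hy : HasDerivAt (fun s => x s - xstar) (v t) t := hx.sub_const xstar
  have hw := (hv.add (hy.const_smul a)).norm_sq
  have hp : HasDerivAt (fun s : ℝ => r / s) (-(r / t ^ 2)) t := by
    have h := (hasDerivAt_inv ht).const_mul r
    simpa [div_eq_mul_inv] using h
  have hE := ((hfx.sub_const (f xstar)).add (hw.const_mul (1 / 2))).add
    ((((hp.sub_const (2 * a)).const_mul a).const_mul (1 / 2)).mul hy.norm_sq)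
  have hv' : v' = -((r / t) • v t) - gradient f (x t) := by
    rw [← sub_eq_zero, ← hode]; abel
  refine hE.congr_deriv ?_
  subst hv'
  simp only [Pi.add_apply, Pi.smul_apply]
  generalize x t - xstar = y
  rw [real_inner_comm (v t) (gradient f (x t)), real_inner_comm y (gradient f (x t)),
    real_inner_comm y (v t)]
  simp only [inner_add_left, inner_add_right, inner_sub_right,
    inner_neg_right, real_inner_smul_left, real_inner_smul_right, real_inner_self_eq_norm_sq]
  ring

/-- Exponential decay of `dampedEnergy` along the flow with friction `r / t`. -/
lemma dampedEnergy_le_exp_mul {f : E → ℝ} (hf : Differentiable ℝ f) {xstar : E}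
    {μ a r t₀ T : ℝ} (ha : 0 < a) (ht₀ : 0 < t₀) (hT : t₀ ≤ T)
    (hfriction : r = 2 * a * T) (hrate : a ^ 2 * r ≤ 4 * (a ^ 2 + μ))
    (hsc : ∀ y z : E, f z ≥ f y + ⟪gradient f y, z - y⟫ + μ / 2 * ‖z - y‖ ^ 2)
    {x v v' : ℝ → E}
    (hx : ∀ t ∈ Set.Icc t₀ T, HasDerivWithinAt x (v t) (Set.Icc t₀ T) t)
    (hv : ∀ t ∈ Set.Icc t₀ T, HasDerivWithinAt v (v' t) (Set.Icc t₀ T) t)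
    (hode : ∀ t ∈ Set.Icc t₀ T, v' t + (r / t) • v t + gradient f (x t) = 0) :
    dampedEnergy f xstar a (r / T) (x T) (v T) ≤
      Real.exp (-a * (T - t₀)) * dampedEnergy f xstar a (r / t₀) (x t₀) (v t₀) := by
  have hxc : ContinuousOn x (Set.Icc t₀ T) := fun t ht => (hx t ht).continuousWithinAt
  have hvc : ContinuousOn v (Set.Icc t₀ T) := fun t ht => (hv t ht).continuousWithinAt
  have hpc : ContinuousOn (fun t : ℝ => r / t) (Set.Icc t₀ T) :=
    continuousOn_const.div continuousOn_id fun t ht => (ht₀.trans_le ht.1).ne'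
  have hfc : ContinuousOn (fun t => f (x t)) (Set.Icc t₀ T) :=
    hf.continuous.comp_continuousOn hxc
  have hcont : ContinuousOn
      (fun t => Real.exp (a * t) * dampedEnergy f xstar a (r / t) (x t) (v t))
      (Set.Icc t₀ T) := by
    have hyc : ContinuousOn (fun t => x t - xstar) (Set.Icc t₀ T) := hxc.sub continuousOn_const
    have hexpc : Continuous fun t : ℝ => Real.exp (a * t) := by fun_prop
    exact hexpc.continuousOn.mul (((hfc.sub continuousOn_const).add
      (continuousOn_const.mul ((hvc.add (hyc.const_smul a)).norm.pow 2))).add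
      ((continuousOn_const.mul (continuousOn_const.mul (hpc.sub continuousOn_const))).mul
        (hyc.norm.pow 2)))
  have hanti : AntitoneOn
      (fun t => Real.exp (a * t) * dampedEnergy f xstar a (r / t) (x t) (v t))
      (Set.Icc t₀ T) := by
    refine antitoneOn_of_deriv_nonpos (convex_Icc t₀ T) hcont ?_ ?_
    all_goals
      intro t ht
      rw [interior_Icc] at ht
      have hmem := Set.Ioo_subset_Icc_self ht
      have hnhds := Icc_mem_nhds ht.1 ht.2
      have htpos : 0 < t := ht₀.trans ht.1
      have hE := hasDerivAt_dampedEnergy hf xstar a r htpos.ne' ((hx t hmem).hasDerivAt hnhds)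
        ((hv t hmem).hasDerivAt hnhds) (hode t hmem)
      have hG := (((hasDerivAt_id t).const_mul a).exp).mul hE
    · exact hG.differentiableAt.differentiableWithinAt
    · refine (hG.deriv.le).trans ?_
      have hconv := hsc (x t) xstar
      have hp : 2 * a ≤ r / t := by
        rw [le_div_iff₀ htpos, hfriction]
        exact mul_le_mul_of_nonneg_left ht.2.le (by positivity)
      have hcoef : a * (r / t) - r / t ^ 2 ≤ a ^ 2 + μ := by
        have hr : 0 < r := by rw [hfriction]; have := ht₀.trans_le hT; positivity
        have hsq : 0 ≤ r * (1 / t - a / 2) ^ 2 := by positivity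
        have heq : a * (r / t) - r / t ^ 2 = a ^ 2 * r / 4 - r * (1 / t - a / 2) ^ 2 := by
          field_simp
          ring
        linarith
      rw [← neg_sub (x t) xstar, inner_neg_right, norm_neg] at hconv
      have h₁ := mul_le_mul_of_nonneg_left hconv ha.le
      have h₂ := mul_nonneg (sub_nonneg.2 hp) (sq_nonneg ‖v t‖)
      have h₃ := mul_nonneg (mul_nonneg ha.le (sub_nonneg.2 hcoef)) (sq_nonneg ‖x t - xstar‖)
      have h₄ := mul_nonneg ha.le (sq_nonneg ‖v t‖)
      have hnorm : ‖v t + a • (x t - xstar)‖ ^ 2 = ‖v t‖ ^ 2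
          + 2 * (a * ⟪v t, x t - xstar⟫) + a ^ 2 * ‖x t - xstar‖ ^ 2 := by
        rw [norm_add_sq_real, real_inner_smul_right, norm_smul, mul_pow, Real.norm_eq_abs, sq_abs]
      have hexp := Real.exp_pos (a * t)
      simp only [id, mul_one, dampedEnergy, hnorm]
      rw [mul_assoc, ← mul_add]
      refine mul_nonpos_of_nonneg_of_nonpos hexp.le ?_
      linarith
  have h := hanti (Set.left_mem_Icc.2 hT) (Set.right_mem_Icc.2 hT) hT
  have hsplit : Real.exp (-a * (T - t₀)) = Real.exp (a * t₀) / Real.exp (a * T) := by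
    rw [← Real.exp_sub]; congr 1; ring
  rw [hsplit, div_mul_eq_mul_div, le_div_iff₀ (Real.exp_pos _), mul_comm]
  exact h

end DampedFlow

/-- Restart scheme: with `μ > 0`, `l > 0`, `c > 1`,
`T = 2(l² + 1)/(l³√μ)` and `ρ = (2(c−1)l² + 1)·e^{(−1 + 1/c)·2(l² + 1)/l²}`, a sequence of
trajectories `x_i` on `[T/c, T]`, each solving `ẍ + (4(l² + 1)/(l²t))ẋ + ∇f(x) = 0` with
matching restart data `x_{i+1}(T/c) = x_i(T)`, `ẋ_{i+1}(T/c) = ẋ_i(T)`, satisfies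
`g_i ≤ ρ^i · g_0`, where `g_0 = f(x_1(T/c)) − f* + (1/2)‖ẋ_1(T/c) + l√μ(x_1(T/c) − x*)‖²`
and `g_i = f(x_i(T)) − f* + (1/2)‖ẋ_i(T) + l√μ(x_i(T) − x*)‖²` for `i ≥ 1`. -/
theorem nag_flow_restart_scheme {n : ℕ}
    (μ l c T ρ : ℝ) (hμ : 0 < μ) (hl : 0 < l) (hc : 1 < c)
    (hT : T = 2 * (l ^ 2 + 1) / (l ^ 3 * Real.sqrt μ))
    (hρ : ρ = (2 * (c - 1) * l ^ 2 + 1) *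
      Real.exp ((-1 + 1 / c) * (2 * (l ^ 2 + 1) / l ^ 2)))
    (f : EuclideanSpace ℝ (Fin n) → ℝ)
    (xstar : EuclideanSpace ℝ (Fin n))
    (hf : ContDiff ℝ 1 f)
    (hmin : ∀ y, f xstar ≤ f y)
    (hsc : ∀ y z : EuclideanSpace ℝ (Fin n),
      f z ≥ f y + ⟪gradient f y, z - y⟫ + μ / 2 * ‖z - y‖ ^ 2)
    (X V A : ℕ → ℝ → EuclideanSpace ℝ (Fin n))
    (hx : ∀ i : ℕ, 1 ≤ i → ∀ t ∈ Set.Icc (T / c) T,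
      HasDerivWithinAt (X i) (V i t) (Set.Icc (T / c) T) t)
    (hv : ∀ i : ℕ, 1 ≤ i → ∀ t ∈ Set.Icc (T / c) T,
      HasDerivWithinAt (V i) (A i t) (Set.Icc (T / c) T) t)
    (hode : ∀ i : ℕ, 1 ≤ i → ∀ t ∈ Set.Icc (T / c) T,
      A i t + (4 * (l ^ 2 + 1) / (l ^ 2 * t)) • V i t + gradient f (X i t) = 0)
    (hrestart_x : ∀ i : ℕ, 1 ≤ i → X (i + 1) (T / c) = X i T)
    (hrestart_v : ∀ i : ℕ, 1 ≤ i → V (i + 1) (T / c) = V i T) :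
    ∀ i : ℕ, 1 ≤ i →
      f (X i T) - f xstar
          + 1 / 2 * ‖V i T + (l * Real.sqrt μ) • (X i T - xstar)‖ ^ 2
        ≤ ρ ^ i *
          (f (X 1 (T / c)) - f xstar
            + 1 / 2 * ‖V 1 (T / c) + (l * Real.sqrt μ) • (X 1 (T / c) - xstar)‖ ^ 2) := by
  set a := l * Real.sqrt μ with ha_def
  have hs : 0 < Real.sqrt μ := Real.sqrt_pos.2 hμ
  have ha : 0 < a := mul_pos hl hs
  have ha2 : a ^ 2 = l ^ 2 * μ := by rw [ha_def, mul_pow, Real.sq_sqrt hμ.le]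
  have hc0 : 0 < c := one_pos.trans hc
  have hTpos : 0 < T := by rw [hT]; positivity
  have hTc : T / c ≤ T := div_le_self hTpos.le hc.le
  have haT : a * T = 2 * (l ^ 2 + 1) / l ^ 2 := by
    rw [hT, ha_def]
    field_simp
  have hr : 4 * (l ^ 2 + 1) / l ^ 2 = 2 * a * T := by
    rw [mul_assoc, haT]; ring
  have hrate : a ^ 2 * (4 * (l ^ 2 + 1) / l ^ 2) ≤ 4 * (a ^ 2 + μ) := by
    rw [ha2]
    apply le_of_eq
    field_simp
  have hρ' : ρ = (2 * (c - 1) * l ^ 2 + 1) * Real.exp (-a * (T - T / c)) := by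
    rw [hρ, ← haT]
    congr 2
    ring
  have hρ0 : 0 ≤ ρ := by
    have : 0 < c - 1 := sub_pos.2 hc
    rw [hρ]; positivity
  have hround : ∀ i : ℕ, 1 ≤ i →
      f (X i T) - f xstar + 1 / 2 * ‖V i T + a • (X i T - xstar)‖ ^ 2 ≤
        ρ * (f (X i (T / c)) - f xstar
          + 1 / 2 * ‖V i (T / c) + a • (X i (T / c) - xstar)‖ ^ 2) := by
    intro i hi
    have hdecay := dampedEnergy_le_exp_mul (hf.differentiable one_ne_zero) (xstar := xstar) ha
      (div_pos hTpos hc0) hTc hr hrate hsc (hx i hi) (hv i hi)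
      (fun t ht => by rw [div_div]; exact hode i hi t ht)
    have hend : 4 * (l ^ 2 + 1) / l ^ 2 / T = 2 * a := by
      rw [hr]; field_simp
    have hstart : 4 * (l ^ 2 + 1) / l ^ 2 / (T / c) = 2 * a * c := by
      rw [hr]; field_simp
    rw [hend, hstart] at hdecay
    unfold dampedEnergy at hdecay
    rw [sub_self, mul_zero, mul_zero, zero_mul, add_zero] at hdecay
    refine hdecay.trans ?_
    rw [hρ', mul_comm (2 * (c - 1) * l ^ 2 + 1), mul_assoc (Real.exp _)]
    refine mul_le_mul_of_nonneg_left ?_ (Real.exp_pos _).le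
    have hgrowth := quadratic_growth_of_strongly_convex hmin hsc (X i (T / c))
    have hcl : 0 ≤ 2 * (c - 1) * l ^ 2 := by
      have : 0 < c - 1 := sub_pos.2 hc
      positivity
    have h₁ := mul_le_mul_of_nonneg_left hgrowth hcl
    have h₂ := mul_nonneg hcl (sq_nonneg ‖V i (T / c) + a • (X i (T / c) - xstar)‖)
    have h₃ : 1 / 2 * (a * (2 * a * c - 2 * a)) * ‖X i (T / c) - xstar‖ ^ 2
        = 2 * (c - 1) * l ^ 2 * (μ / 2 * ‖X i (T / c) - xstar‖ ^ 2) := by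
      linear_combination (c - 1) * ‖X i (T / c) - xstar‖ ^ 2 * ha2
    rw [h₃]
    linarith
  intro i hi
  induction i, hi using Nat.le_induction with
  | base => simpa using hround 1 le_rfl
  | succ k hk ih =>
    have h := hround (k + 1) (Nat.le_add_left 1 k)
    rw [hrestart_x k hk, hrestart_v k hk] at h
    refine h.trans ((mul_le_mul_of_nonneg_left ih hρ0).trans_eq ?_)
    rw [pow_succ' ρ, mul_assoc]
end

section
/- Let μ > 0, r > 0, 0 < α < 1, and let f : ℝⁿ → ℝ be a continuously differentiable μ-strongly convex function with global minimizer x*. Let x : (0,∞) → ℝⁿ be a twice differentiable solution of ẍ(t) + (r/t^α)·ẋ(t) + ∇f(x(t)) = 0 for all t > 0. Then for every ε with 0 < ε < 2/3, f(x(t)) − f(x*) = O( e^{−(2/3 − ε)·(r/(1−α))·t^{1−α}} ) as t → ∞. -/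
open scoped RealInnerProductSpace

/-- The differential inequality satisfied by the Lyapunov function
`F + ‖v + (2 / 3) γ z‖ ^ 2 / 2`, where `γ` is the damping coefficient and `z` the displacement
from the minimizer. -/
theorem nag_lyapunov_deriv_le {E : Type*} [NormedAddCommGroup E] [InnerProductSpace ℝ E]
    {g v z a : E} {F μ γ ε s d : ℝ} (hγ : 0 ≤ γ) (hε : 0 < ε)
    (hF0 : 0 ≤ F) (hF : F + μ / 2 * ‖z‖ ^ 2 ≤ ⟪g, z⟫) (ha : a + γ • v + g = 0)
    (hd : d = 2 / 9 * γ - 2 / 3 * s) (hdμ : d ^ 2 ≤ 2 / 3 * ε * μ) :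
    ⟪g, v⟫ + ⟪v + (2 / 3 * γ) • z, a + ((2 / 3 * γ) • v + (-(2 / 3 * γ * s)) • z)⟫
      + (2 / 3 - ε) * γ * (F + ‖v + (2 / 3 * γ) • z‖ ^ 2 / 2) ≤ 0 := by
  obtain ⟨w, hw⟩ : ∃ w, w = v + (2 / 3 * γ) • z := ⟨_, rfl⟩
  have hv : v = w - (2 / 3 * γ) • z := by rw [hw]; abel
  have ha' : a = -(γ • v) - g := by
    rw [← sub_eq_zero, ← ha]; abel
  rw [← hw, ha', hv]
  have hsq : 0 ≤ ⟪ε • w - d • z, ε • w - d • z⟫ := real_inner_self_nonneg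
  have hcomm : ⟪z, w⟫ = ⟪w, z⟫ := real_inner_comm _ _
  have hgw : ⟪w, g⟫ = ⟪g, w⟫ := real_inner_comm _ _
  simp only [inner_add_right, inner_sub_right, inner_sub_left, inner_neg_right,
    real_inner_smul_left, real_inner_smul_right, hcomm, hgw] at hsq ⊢
  simp only [real_inner_self_eq_norm_sq] at hsq ⊢
  have hcross : d * ⟪w, z⟫ ≤ ε / 2 * ‖w‖ ^ 2 + μ / 3 * ‖z‖ ^ 2 := by
    have h := mul_le_mul_of_nonneg_right hdμ (sq_nonneg ‖z‖)
    refine le_of_mul_le_mul_left ?_ hε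
    nlinarith
  have h₁ := mul_le_mul_of_nonneg_left hcross hγ
  have h₂ := mul_le_mul_of_nonneg_left hF hγ
  have h₃ : 0 ≤ ε * γ * F := by positivity
  subst hd
  nlinarith

/-- For `μ > 0`, `r > 0`, `0 < α < 1` and a continuously differentiable
`μ`-strongly convex `f` with minimizer `x*`, any twice differentiable solution (on `(0,∞)`)
of the generalized NAG flow `ẍ(t) + (r/t^α)·ẋ(t) + ∇f(x(t)) = 0` satisfies, for every
`0 < ε < 2/3`, `f(x(t)) − f(x*) = O(e^{−(2/3 − ε)(r/(1−α))t^{1−α}})` as `t → ∞`. -/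
theorem generalized_nag_flow_rate {n : ℕ}
    (μ r α : ℝ) (hμ : 0 < μ) (hr : 0 < r) (hα0 : 0 < α) (hα1 : α < 1)
    (f : EuclideanSpace ℝ (Fin n) → ℝ)
    (xstar : EuclideanSpace ℝ (Fin n))
    (hf : ContDiff ℝ 1 f)
    (hmin : ∀ y, f xstar ≤ f y)
    (hsc : ∀ y z : EuclideanSpace ℝ (Fin n),
      f z ≥ f y + ⟪gradient f y, z - y⟫ + μ / 2 * ‖z - y‖ ^ 2)
    (x v a : ℝ → EuclideanSpace ℝ (Fin n))
    (hx : ∀ t : ℝ, 0 < t → HasDerivAt x (v t) t)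
    (hv : ∀ t : ℝ, 0 < t → HasDerivAt v (a t) t)
    (hode : ∀ t : ℝ, 0 < t →
      a t + (r / t ^ α) • v t + gradient f (x t) = 0) :
    ∀ ε : ℝ, 0 < ε → ε < 2 / 3 →
      ∃ T C : ℝ, 0 < T ∧ 0 < C ∧
        ∀ t : ℝ, T ≤ t → f (x t) - f xstar
          ≤ C * Real.exp (-((2 / 3 - ε) * (r / (1 - α)) * t ^ (1 - α))) := by
  intro ε hε _
  have hlim : Filter.Tendsto (fun t : ℝ => (2 / 9 * (r * t ^ (-α)) - 2 / 3 * (α * t⁻¹)) ^ 2)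
      Filter.atTop (nhds 0) := by
    simpa using ((((tendsto_rpow_neg_atTop hα0).const_mul r).const_mul (2 / 9)).sub
      ((tendsto_inv_atTop_zero.const_mul α).const_mul (2 / 3))).pow 2
  obtain ⟨T, hT⟩ := Filter.eventually_atTop.1
    ((hlim.eventually (eventually_le_nhds (show 0 < 2 / 3 * ε * μ by positivity))).and
      (Filter.eventually_gt_atTop 0))
  have hT0 : 0 < T := (hT T le_rfl).2
  set K : ℝ := (2 / 3 - ε) * (r / (1 - α)) with hK
  set L : ℝ → ℝ := fun t =>
    f (x t) - f xstar + ‖v t + (2 / 3 * (r * t ^ (-α))) • (x t - xstar)‖ ^ 2 / 2 with hL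
  have hLderiv : ∀ t, 0 < t → HasDerivAt L (⟪gradient f (x t), v t⟫
      + ⟪v t + (2 / 3 * (r * t ^ (-α))) • (x t - xstar), a t + ((2 / 3 * (r * t ^ (-α))) • v t
        + (-(2 / 3 * (r * t ^ (-α)) * (α * t⁻¹))) • (x t - xstar))⟫) t := by
    intro t ht
    have hfx : HasDerivAt (fun t => f (x t)) ⟪gradient f (x t), v t⟫ t := by
      have h := (hf.differentiable one_ne_zero (x t)).hasGradientAt.hasFDerivAt.comp_hasDerivAt t
        (hx t ht)
      exact h.congr_deriv (by simp)
    have hβ : HasDerivAt (fun t : ℝ => 2 / 3 * (r * t ^ (-α)))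
        (-(2 / 3 * (r * t ^ (-α)) * (α * t⁻¹))) t := by
      refine (((Real.hasDerivAt_rpow_const (p := -α) (Or.inl ht.ne')).const_mul r).const_mul
        (2 / 3 : ℝ)).congr_deriv ?_
      rw [Real.rpow_sub_one ht.ne']
      ring
    have hsq := ((hv t ht).add (hβ.smul ((hx t ht).sub_const xstar))).norm_sq
    refine ((hfx.sub_const (f xstar)).add (hsq.div_const 2)).congr_deriv ?_
    simp
  have hexp : ∀ t, 0 < t → HasDerivAt (fun t : ℝ => Real.exp (K * t ^ (1 - α)))
      (Real.exp (K * t ^ (1 - α)) * ((2 / 3 - ε) * (r * t ^ (-α)))) t := by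
    intro t ht
    refine ((Real.hasDerivAt_rpow_const (p := 1 - α) (Or.inl ht.ne')).const_mul
      K).exp.congr_deriv ?_
    have : 1 - α ≠ 0 := by linarith
    rw [hK, show 1 - α - 1 = -α by ring]
    field_simp
  have hanti : AntitoneOn (fun t => L t * Real.exp (K * t ^ (1 - α))) (Set.Ici T) := by
    have hderiv := fun t (ht : 0 < t) => (hLderiv t ht).mul (hexp t ht)
    refine antitoneOn_of_hasDerivWithinAt_nonpos (convex_Ici T)
      (fun t ht => (hderiv t (hT0.trans_le ht)).continuousAt.continuousWithinAt)
      (fun t ht => (hderiv t (hT0.trans_le (interior_subset ht))).hasDerivWithinAt) ?_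
    intro t ht
    obtain ⟨hd, ht0⟩ := hT t (interior_subset ht)
    have hstrong : f (x t) - f xstar + μ / 2 * ‖x t - xstar‖ ^ 2
        ≤ ⟪gradient f (x t), x t - xstar⟫ := by
      have h := hsc (x t) xstar
      rw [← neg_sub (x t) xstar, inner_neg_right, norm_neg] at h
      linarith
    have hode' : a t + (r * t ^ (-α)) • v t + gradient f (x t) = 0 := by
      rw [Real.rpow_neg ht0.le, ← div_eq_mul_inv]
      exact hode t ht0
    have h := nag_lyapunov_deriv_le (by positivity) hε (sub_nonneg.2 (hmin (x t))) hstrong hode'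
      rfl hd
    have h' := mul_nonpos_of_nonneg_of_nonpos (Real.exp_pos (K * t ^ (1 - α))).le h
    refine le_of_eq_of_le ?_ h'
    simp only [hL]
    ring
  have hFL : ∀ t, f (x t) - f xstar ≤ L t := fun t => le_add_of_nonneg_right (by positivity)
  have hL0 : 0 ≤ L T := (sub_nonneg.2 (hmin (x T))).trans (hFL T)
  refine ⟨T, L T * Real.exp (K * T ^ (1 - α)) + 1, hT0, by positivity, fun t ht => ?_⟩
  refine (hFL t).trans ?_
  have h : L t * Real.exp (K * t ^ (1 - α)) ≤ L T * Real.exp (K * T ^ (1 - α)) :=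
    hanti Set.self_mem_Ici ht ht
  rw [Real.exp_neg, ← div_eq_mul_inv, le_div_iff₀ (Real.exp_pos _)]
  linarith
end

section
/- Let μ > 0, r > 0, 0 < α < 1, and 0 < k < 2/3. Let f : ℝⁿ → ℝ be a continuously differentiable μ-strongly convex function with global minimizer x*, write f* = f(x*), and let x : (0,∞) → ℝⁿ be a twice differentiable solution of ẍ(t) + (r/t^α)·ẋ(t) + ∇f(x(t)) = 0 for all t > 0. Define γ(t) = k·(r/(1−α))·t^{1−α} and E(t) = (r²k/2)·t^{−2α}·e^{γ(t)}·‖x(t) − x*‖² + r·k·t^{−α}·e^{γ(t)}·⟨x(t) − x*, ẋ(t)⟩ + (1/2)·e^{γ(t)}·‖ẋ(t)‖² + e^{γ(t)}·( f(x(t)) − f* ). Then E(t) ≥ e^{γ(t)}·( f(x(t)) − f* ) for all t > 0, and there exists T > 0 such that E is non-increasing on [T,∞). -/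
open scoped RealInnerProductSpace

open Filter Topology

/-- A binary quadratic form in two vectors is nonnegative when its discriminant is nonpositive. -/
lemma quadratic_form_inner_nonneg {V : Type*} [NormedAddCommGroup V] [InnerProductSpace ℝ V]
    {A B C : ℝ} (hA : 0 < A) (hdisc : B ^ 2 ≤ 4 * A * C) (w v : V) :
    0 ≤ A * ‖v‖ ^ 2 + B * ⟪w, v⟫ + C * ‖w‖ ^ 2 := by
  have hsq : ‖(2 * A) • v + B • w‖ ^ 2
      = 4 * A ^ 2 * ‖v‖ ^ 2 + 4 * A * B * ⟪w, v⟫ + B ^ 2 * ‖w‖ ^ 2 := by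
    rw [norm_add_sq_real, norm_smul, norm_smul, inner_smul_left, inner_smul_right,
      real_inner_comm, mul_pow, mul_pow, Real.norm_eq_abs, Real.norm_eq_abs, sq_abs, sq_abs]
    simp only [conj_trivial]
    ring
  have hnonneg := sq_nonneg ‖(2 * A) • v + B • w‖
  have hw := mul_le_mul_of_nonneg_right hdisc (sq_nonneg ‖w‖)
  refine nonneg_of_mul_nonneg_right (a := 4 * A) ?_ (by positivity)
  nlinarith

/-- The Lyapunov function without its exponential weight, with damping coefficient `p`,
displacement `w`, velocity `v` and objective gap `F`. -/
noncomputable def nagEnergy {V : Type*} [NormedAddCommGroup V] [InnerProductSpace ℝ V]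
    (k p : ℝ) (w v : V) (F : ℝ) : ℝ :=
  k / 2 * p ^ 2 * ‖w‖ ^ 2 + k * p * ⟪w, v⟫ + 1 / 2 * ‖v‖ ^ 2 + F

lemma le_nagEnergy {V : Type*} [NormedAddCommGroup V] [InnerProductSpace ℝ V]
    {k : ℝ} (hk0 : 0 < k) (hk1 : k ≤ 1) (p : ℝ) (w v : V) (F : ℝ) :
    F ≤ nagEnergy k p w v F := by
  have h := quadratic_form_inner_nonneg (A := 1 / 2) (B := k * p) (C := k / 2 * p ^ 2)
    (by norm_num)
    (by nlinarith [mul_nonneg (mul_nonneg hk0.le (sub_nonneg.2 hk1)) (sq_nonneg p)]) w v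
  unfold nagEnergy
  linarith

/-- The dissipation inequality: the derivative of the weighted energy along the flow, divided by
the weight, is nonpositive once the damping `p` and its logarithmic decay rate `q` are small. -/
lemma nagEnergy_dissipation {V : Type*} [NormedAddCommGroup V] [InnerProductSpace ℝ V]
    {k μ p q F : ℝ} {w v a g : V} (hk0 : 0 < k) (hk1 : k < 2 / 3) (hp : 0 < p) (hq : 0 ≤ q)
    (hcross : (k ^ 2 * p - k * q) ^ 2 ≤ 4 * (1 - 3 / 2 * k) * (k * μ / 4))
    (hsmall : k ^ 2 * p ^ 2 / 2 ≤ k * μ / 4)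
    (hode : a = -(p • v) - g) (hF : F ≤ ⟪w, g⟫ - μ / 2 * ‖w‖ ^ 2) :
    k * p * nagEnergy k p w v F
      + (k * p * (-(q * p)) * ‖w‖ ^ 2 + k * p ^ 2 * ⟪w, v⟫
        + (k * (-(q * p)) * ⟪w, v⟫ + k * p * (⟪w, a⟫ + ⟪v, v⟫)) + ⟪v, a⟫ + ⟪g, v⟫) ≤ 0 := by
  have hquad := quadratic_form_inner_nonneg (A := 1 - 3 / 2 * k) (B := -(k ^ 2 * p - k * q))
    (C := k * μ / 4) (by linarith) (by rwa [neg_sq]) w v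
  have hw := mul_le_mul_of_nonneg_right hsmall (sq_nonneg ‖w‖)
  have hqw : 0 ≤ k * p * q * ‖w‖ ^ 2 := by positivity
  have hgap := mul_le_mul_of_nonneg_left hF hk0.le
  have hsum := mul_nonneg hp.le (show 0 ≤ (1 - 3 / 2 * k) * ‖v‖ ^ 2
      + -(k ^ 2 * p - k * q) * ⟪w, v⟫ + k * μ / 2 * ‖w‖ ^ 2 - k ^ 2 * p ^ 2 / 2 * ‖w‖ ^ 2
      + k * p * q * ‖w‖ ^ 2 + (k * (⟪w, g⟫ - μ / 2 * ‖w‖ ^ 2) - k * F) by linarith)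
  subst hode
  rw [inner_sub_right, inner_sub_right, inner_neg_right, inner_neg_right, inner_smul_right,
    inner_smul_right, real_inner_self_eq_norm_sq, nagEnergy]
  have hcomm : ⟪v, g⟫ = ⟪g, v⟫ := real_inner_comm _ _
  nlinarith

lemma HasDerivAt.nagEnergy {V : Type*} [NormedAddCommGroup V] [InnerProductSpace ℝ V]
    {p F : ℝ → ℝ} {w v : ℝ → V} {p' F' t : ℝ} {a : V} (k : ℝ) (hp : HasDerivAt p p' t)
    (hw : HasDerivAt w (v t) t) (hv : HasDerivAt v a t) (hF : HasDerivAt F F' t) :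
    HasDerivAt (fun s => nagEnergy k (p s) (w s) (v s) (F s))
      (k * p t * p' * ‖w t‖ ^ 2 + k * p t ^ 2 * ⟪w t, v t⟫
        + (k * p' * ⟪w t, v t⟫ + k * p t * (⟪w t, a⟫ + ⟪v t, v t⟫)) + ⟪v t, a⟫ + F') t := by
  have h := (((((hp.pow 2).const_mul (k / 2)).mul hw.norm_sq).add
    ((hp.const_mul k).mul (hw.inner ℝ hv))).add (hv.norm_sq.const_mul (1 / 2))).add hF
  refine h.congr_deriv ?_
  simp only [Pi.pow_apply]
  push_cast
  ring

/-- Lyapunov function for the generalized NAG flow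
`ẍ + (r/t^α)ẋ + ∇f(x) = 0` with `μ > 0`, `r > 0`, `0 < α < 1`, `0 < k < 2/3`:
with `γ(t) = k(r/(1−α))t^{1−α}`, the function
`E(t) = (r²k/2)t^{−2α}e^{γ(t)}‖x(t) − x*‖² + rk·t^{−α}e^{γ(t)}⟨x(t) − x*, ẋ(t)⟩
        + (1/2)e^{γ(t)}‖ẋ(t)‖² + e^{γ(t)}(f(x(t)) − f*)`
dominates `e^{γ(t)}(f(x(t)) − f*)` on `(0,∞)` and is non-increasing on some `[T,∞)`. -/
theorem generalized_nag_flow_lyapunov {n : ℕ}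
    (μ r α k : ℝ) (hμ : 0 < μ) (hr : 0 < r) (hα0 : 0 < α) (hα1 : α < 1)
    (hk0 : 0 < k) (hk1 : k < 2 / 3)
    (f : EuclideanSpace ℝ (Fin n) → ℝ)
    (xstar : EuclideanSpace ℝ (Fin n))
    (hf : ContDiff ℝ 1 f)
    (hmin : ∀ y, f xstar ≤ f y)
    (hsc : ∀ y z : EuclideanSpace ℝ (Fin n),
      f z ≥ f y + ⟪gradient f y, z - y⟫ + μ / 2 * ‖z - y‖ ^ 2)
    (x v a : ℝ → EuclideanSpace ℝ (Fin n))
    (hx : ∀ t : ℝ, 0 < t → HasDerivAt x (v t) t)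
    (hv : ∀ t : ℝ, 0 < t → HasDerivAt v (a t) t)
    (hode : ∀ t : ℝ, 0 < t →
      a t + (r / t ^ α) • v t + gradient f (x t) = 0) :
    (∀ t : ℝ, 0 < t →
        r ^ 2 * k / 2 * t ^ (-(2 * α)) *
            Real.exp (k * (r / (1 - α)) * t ^ (1 - α)) * ‖x t - xstar‖ ^ 2
          + r * k * t ^ (-α) *
              Real.exp (k * (r / (1 - α)) * t ^ (1 - α)) * ⟪x t - xstar, v t⟫
          + 1 / 2 * Real.exp (k * (r / (1 - α)) * t ^ (1 - α)) * ‖v t‖ ^ 2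
          + Real.exp (k * (r / (1 - α)) * t ^ (1 - α)) * (f (x t) - f xstar)
        ≥ Real.exp (k * (r / (1 - α)) * t ^ (1 - α)) * (f (x t) - f xstar))
      ∧ ∃ T : ℝ, 0 < T ∧
        AntitoneOn (fun t : ℝ =>
          r ^ 2 * k / 2 * t ^ (-(2 * α)) *
              Real.exp (k * (r / (1 - α)) * t ^ (1 - α)) * ‖x t - xstar‖ ^ 2
            + r * k * t ^ (-α) *
                Real.exp (k * (r / (1 - α)) * t ^ (1 - α)) * ⟪x t - xstar, v t⟫
            + 1 / 2 * Real.exp (k * (r / (1 - α)) * t ^ (1 - α)) * ‖v t‖ ^ 2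
            + Real.exp (k * (r / (1 - α)) * t ^ (1 - α)) * (f (x t) - f xstar))
          (Set.Ici T) := by
  set γ : ℝ → ℝ := fun t => k * (r / (1 - α)) * t ^ (1 - α) with hγ
  set p : ℝ → ℝ := fun t => r * t ^ (-α) with hp
  set E : ℝ → ℝ := fun t =>
    Real.exp (γ t) * nagEnergy k (p t) (x t - xstar) (v t) (f (x t) - f xstar) with hE
  have hform : ∀ t : ℝ, 0 < t →
      r ^ 2 * k / 2 * t ^ (-(2 * α)) * Real.exp (γ t) * ‖x t - xstar‖ ^ 2
        + r * k * t ^ (-α) * Real.exp (γ t) * ⟪x t - xstar, v t⟫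
        + 1 / 2 * Real.exp (γ t) * ‖v t‖ ^ 2 + Real.exp (γ t) * (f (x t) - f xstar) = E t := by
    intro t ht
    have hsq : t ^ (-(2 * α)) = (t ^ (-α)) ^ 2 := by
      rw [← Real.rpow_natCast, ← Real.rpow_mul ht.le]
      congr 1
      push_cast
      ring
    simp only [hE, hp, nagEnergy, hsq]
    ring
  have hγ' : ∀ t : ℝ, 0 < t → HasDerivAt γ (k * p t) t := by
    intro t ht
    refine ((Real.hasDerivAt_rpow_const (p := 1 - α) (Or.inl ht.ne')).const_mul
      (k * (r / (1 - α)))).congr_deriv ?_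
    have h1 : 1 - α ≠ 0 := by linarith
    rw [show 1 - α - 1 = -α by ring]
    simp only [hp]
    field_simp
  have hp' : ∀ t : ℝ, 0 < t → HasDerivAt p (-(α / t * p t)) t := by
    intro t ht
    refine ((Real.hasDerivAt_rpow_const (p := -α) (Or.inl ht.ne')).const_mul r).congr_deriv ?_
    rw [Real.rpow_sub_one ht.ne']
    simp only [hp]
    ring
  have hgrad : ∀ t : ℝ, 0 < t →
      HasDerivAt (fun s => f (x s) - f xstar) ⟪gradient f (x t), v t⟫ t := by
    intro t ht
    have hdiff := (hf.differentiable (by norm_num) (x t)).hasGradientAt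
    simpa using (hdiff.hasFDerivAt.comp_hasDerivAt t (hx t ht)).sub_const (f xstar)
  have hE' : ∀ t : ℝ, 0 < t → HasDerivAt E _ t := fun t ht =>
    (hγ' t ht).exp.mul
      (HasDerivAt.nagEnergy k (hp' t ht) ((hx t ht).sub_const xstar) (hv t ht) (hgrad t ht))
  have hplim : Tendsto p atTop (𝓝 0) := by
    simpa using (tendsto_rpow_neg_atTop hα0).const_mul r
  have hqlim : Tendsto (fun t : ℝ => α / t) atTop (𝓝 0) := tendsto_const_nhds.div_atTop tendsto_id
  have hcrosslim : Tendsto (fun t => (k ^ 2 * p t - k * (α / t)) ^ 2) atTop (𝓝 0) := by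
    simpa using ((hplim.const_mul (k ^ 2)).sub (hqlim.const_mul k)).pow 2
  have hsmalllim : Tendsto (fun t => k ^ 2 * p t ^ 2 / 2) atTop (𝓝 0) := by
    simpa using ((hplim.pow 2).const_mul (k ^ 2)).div_const 2
  have hkμ : 0 < k * μ / 4 := by positivity
  have hcross_pos : 0 < 4 * (1 - 3 / 2 * k) * (k * μ / 4) :=
    mul_pos (by linarith) hkμ
  obtain ⟨T₀, hT₀⟩ := eventually_atTop.1
    ((hcrosslim.eventually_le_const hcross_pos).and (hsmalllim.eventually_le_const hkμ))
  refine ⟨fun t ht => ?_, max T₀ 1, by positivity, ?_⟩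
  · rw [ge_iff_le, hform t ht]
    exact mul_le_mul_of_nonneg_left (le_nagEnergy hk0 (by linarith) _ _ _ _) (Real.exp_pos _).le
  have hpos : ∀ t ∈ Set.Ici (max T₀ 1), 0 < t := fun t ht =>
    zero_lt_one.trans_le ((le_max_right _ _).trans ht)
  refine AntitoneOn.congr (f₁ := E) ?_ fun t ht => (hform t (hpos t ht)).symm
  refine antitoneOn_of_hasDerivWithinAt_nonpos (convex_Ici _)
    (fun t ht => (hE' t (hpos t ht)).continuousAt.continuousWithinAt)
    (fun t ht => (hE' t (hpos t (interior_subset ht))).hasDerivWithinAt) fun t ht => ?_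
  have ht0 := hpos t (interior_subset ht)
  obtain ⟨hcross, hsmall⟩ := hT₀ t ((le_max_left _ _).trans (interior_subset ht))
  have hacc : a t = -(p t • v t) - gradient f (x t) := by
    have h := hode t ht0
    rw [show r / t ^ α = p t by simp only [hp, Real.rpow_neg ht0.le, div_eq_mul_inv]] at h
    rw [← sub_eq_zero, ← h]
    abel
  have hgap : f (x t) - f xstar
      ≤ ⟪x t - xstar, gradient f (x t)⟫ - μ / 2 * ‖x t - xstar‖ ^ 2 := by
    have h := hsc (x t) xstar
    rw [← neg_sub (x t) xstar, inner_neg_right, norm_neg, real_inner_comm] at h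
    linarith
  have hdiss := nagEnergy_dissipation hk0 hk1 (by positivity : 0 < p t)
    (by positivity : 0 ≤ α / t) hcross hsmall hacc hgap
  have hweighted := mul_nonpos_of_nonneg_of_nonpos (Real.exp_pos (γ t)).le hdiss
  linarith
end
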